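/- arXiv:math/0601334 — 13 statements merged into one kernel-verified Lean document; each statement's English description precedes it below -/
import Mathlib

section
/- Let d ≥ 1 be an integer, let d_1,…,d_d be positive integers, let K be a field and let z, σ ∈ K satisfy σ ≠ 0, σ^{d_i} ≠ 1 for all i, and z + σ ≠ 0. Then (1/(z+σ))·[ ∏_{i=1}^d (1+z·σ^{d_i−1})/(1−σ^{d_i}) − 1 ] = Σ_{p=0}^{d−1} z^p · g_a(p,σ), where g_a(p,σ) = (−1)^{d+1+p}·[ Σ_{q=0}^{d−1−p} (−1)^q e_{d−q}(σ^{d_1},…,σ^{d_d}) ] / ( σ^{p+1} ∏_{i=1}^d (1−σ^{d_i}) ). In other words, the coefficient of z^p in the absolute coexact double Poincaré series equals the closed-form absolute coexact p-form degeneracy generating function. -/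
open Finset

lemma aux_telescope {K : Type*} [Field K] (E : ℕ → K) (w : K) (d : ℕ) :
    (w + 1) * ∑ p ∈ range d, w ^ p * ((-1 : K) ^ (d + 1 + p) *
      ∑ q ∈ range (d - p), (-1 : K) ^ q * E (d - q)) =
    ∑ k ∈ range (d + 1), E k * w ^ k - ∑ k ∈ range (d + 1), E k * (-1) ^ k := by
  induction d with
  | zero => simp
  | succ d ih =>
    have h1 : ∀ p ∈ range (d + 1), w ^ p * ((-1 : K) ^ (d + 1 + 1 + p) *
        ∑ q ∈ range (d + 1 - p), (-1 : K) ^ q * E (d + 1 - q)) =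
        (-1) ^ d * E (d + 1) * (-w) ^ p + w ^ p * ((-1 : K) ^ (d + 1 + p) *
          ∑ q ∈ range (d - p), (-1 : K) ^ q * E (d - q)) := by
      intro p hp
      have hp' : p ≤ d := by simpa [Nat.lt_succ_iff] using hp
      rw [Nat.succ_sub hp', sum_range_succ']
      have : ∑ q ∈ range (d - p), (-1 : K) ^ (q + 1) * E (d + 1 - (q + 1)) =
          - ∑ q ∈ range (d - p), (-1 : K) ^ q * E (d - q) := by
        rw [← sum_neg_distrib]
        refine sum_congr rfl fun q _ => ?_
        rw [Nat.add_sub_add_right]; ring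
      rw [this, neg_pow w p]
      simp only [Nat.sub_zero]
      ring
    have h2 : ∑ p ∈ range (d + 1), w ^ p * ((-1 : K) ^ (d + 1 + p) *
          ∑ q ∈ range (d - p), (-1 : K) ^ q * E (d - q)) =
        ∑ p ∈ range d, w ^ p * ((-1 : K) ^ (d + 1 + p) *
          ∑ q ∈ range (d - p), (-1 : K) ^ q * E (d - q)) := by
      rw [sum_range_succ]; simp
    have hg := geom_sum_mul (-w) (d + 1)
    have hs : ((-1 : K) ^ d) * (-1) ^ d = 1 := by rw [← mul_pow]; simp
    rw [neg_pow w (d + 1)] at hg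
    rw [sum_congr rfl h1, sum_add_distrib, ← mul_sum, h2, mul_add, ih,
      sum_range_succ (fun k => E k * w ^ k) (d + 1),
      sum_range_succ (fun k => E k * (-1) ^ k) (d + 1)]
    linear_combination (-(-1) ^ d * E (d + 1)) * hg + (E (d + 1) * w ^ (d + 1)) * hs

lemma aux_prod {K : Type*} [Field K] (d : ℕ) (x : Fin d → K) (w : K) :
    ∏ i, (1 + w * x i) = ∑ k ∈ range (d + 1),
      (∑ t ∈ powersetCard k (univ : Finset (Fin d)), ∏ i ∈ t, x i) * w ^ k := by
  rw [prod_one_add, sum_powerset, card_univ, Fintype.card_fin]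
  refine sum_congr rfl fun k _ => ?_
  rw [sum_mul]
  refine sum_congr rfl fun t ht => ?_
  rw [prod_mul_distrib, prod_const, (mem_powersetCard.1 ht).2, mul_comm]

/-- the absolute coexact double Poincaré series equals the generating
function (in the fugacity `z`) of the closed-form absolute coexact `p`-form
degeneracy generating functions `g_a(p,σ)`. -/
theorem absolute_double_poincare_series
    (d : ℕ) (hd : 1 ≤ d) (dd : Fin d → ℕ) (hdd : ∀ i, 0 < dd i)
    (K : Type*) [Field K] (z σ : K) (hσ : σ ≠ 0)
    (hσd : ∀ i, σ ^ dd i ≠ 1) (hzσ : z + σ ≠ 0) :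
    (z + σ)⁻¹ * ((∏ i, (1 + z * σ ^ (dd i - 1)) / (1 - σ ^ dd i)) - 1) =
      ∑ p ∈ range d, z ^ p *
        ((-1 : K) ^ (d + 1 + p) *
            (∑ q ∈ range (d - p), (-1 : K) ^ q *
              ∑ t ∈ powersetCard (d - q) (univ : Finset (Fin d)), ∏ i ∈ t, σ ^ dd i) /
          (σ ^ (p + 1) * ∏ i, (1 - σ ^ dd i))) := by
  have hP : ∏ i, (1 - σ ^ dd i) ≠ 0 :=
    prod_ne_zero_iff.2 fun i _ => sub_ne_zero.2 (hσd i).symm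
  have key := aux_telescope (fun k => ∑ t ∈ powersetCard k (univ : Finset (Fin d)),
    ∏ i ∈ t, σ ^ dd i) (z / σ) d
  rw [← aux_prod, ← aux_prod] at key
  have h1 : ∏ i, (1 + z / σ * σ ^ dd i) = ∏ i, (1 + z * σ ^ (dd i - 1)) := by
    refine prod_congr rfl fun i _ => ?_
    obtain ⟨m, hm⟩ := Nat.exists_eq_succ_of_ne_zero (hdd i).ne'
    rw [hm, Nat.succ_sub_one, pow_succ]
    field_simp
  have h2 : ∏ i, (1 + (-1) * σ ^ dd i) = ∏ i, (1 - σ ^ dd i) :=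
    prod_congr rfl fun i _ => by ring
  rw [h1, h2] at key
  rw [prod_div_distrib]
  generalize ∏ i, (1 - σ ^ dd i) = P at *
  generalize ∏ i, (1 + z * σ ^ (dd i - 1)) = N at *
  have h3 : ∀ p ∈ range d, z ^ p *
        ((-1 : K) ^ (d + 1 + p) *
            (∑ q ∈ range (d - p), (-1 : K) ^ q *
              ∑ t ∈ powersetCard (d - q) (univ : Finset (Fin d)), ∏ i ∈ t, σ ^ dd i) /
          (σ ^ (p + 1) * P)) = (σ * P)⁻¹ * ((z / σ) ^ p * ((-1 : K) ^ (d + 1 + p) *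
            (∑ q ∈ range (d - p), (-1 : K) ^ q *
              ∑ t ∈ powersetCard (d - q) (univ : Finset (Fin d)), ∏ i ∈ t, σ ^ dd i))) := by
    intro p _
    rw [div_pow, pow_succ]
    field_simp
  rw [sum_congr rfl h3, ← mul_sum]
  generalize (∑ p ∈ range d, _ : K) = S at *
  have : N = P + (z / σ + 1) * S := by linear_combination -key
  rw [this]
  field_simp
  ring
end

section
/- Let d ≥ 1 be an integer, let d_1,…,d_d be positive integers, let K be a field and let z, σ ∈ K satisfy σ ≠ 0, σ^{d_i} ≠ 1 for all i, and 1 + zσ ≠ 0. Then (1/(1+zσ))·[ ∏_{i=1}^d (z+σ^{d_i−1})/(1−σ^{d_i}) + z^{d+1}σ ] = Σ_{p=0}^{d−1} z^p · g_r(p,σ) + z^d, where g_r(p,σ) = (−1)^{p}·[ Σ_{q=0}^{p} (−1)^q e_{d−q}(σ^{d_1},…,σ^{d_d}) ] / ( σ^{d−p} ∏_{i=1}^d (1−σ^{d_i}) ). In other words, the coefficient of z^p (for 0 ≤ p ≤ d−1) in the relative coexact double Poincaré series equals the closed-form relative coexact p-form degeneracy generating function, and the coefficient of z^d equals 1. 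-/
open Finset

lemma rdps_expand {K : Type*} [Field K] (d : ℕ) (x : Fin d → K) (w : K) :
    ∏ i, (w + x i) = ∑ q ∈ range (d + 1), w ^ q *
      ∑ t ∈ powersetCard (d - q) (univ : Finset (Fin d)), ∏ i ∈ t, x i := by
  have h1 : ∏ i, (w + x i) = ∏ i, (x i + w) := by simp only [add_comm]
  rw [h1, Finset.prod_add, Finset.sum_powerset, Finset.card_univ, Fintype.card_fin,
    ← Finset.sum_range_reflect]
  apply Finset.sum_congr rfl
  intro q hq
  have hq' : q ≤ d := by simpa [Nat.lt_succ_iff] using hq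
  have e : d + 1 - 1 - q = d - q := by omega
  rw [e, Finset.mul_sum]
  apply Finset.sum_congr rfl
  intro t ht
  rw [Finset.mem_powersetCard] at ht
  rw [Finset.prod_const, Finset.card_sdiff_of_subset ht.1, ht.2, Finset.card_univ,
    Fintype.card_fin, Nat.sub_sub_self hq', mul_comm]

lemma rdps_tele {K : Type*} [Field K] (E : ℕ → K) (w : K) (n : ℕ) :
    (1 + w) * ∑ p ∈ range n, (-w) ^ p * ∑ q ∈ range (p + 1), (-1 : K) ^ q * E q =
      ∑ q ∈ range n, w ^ q * E q - (-w) ^ n * ∑ q ∈ range n, (-1 : K) ^ q * E q := by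
  induction n with
  | zero => simp
  | succ n ih =>
    rw [Finset.sum_range_succ, mul_add, ih, Finset.sum_range_succ (fun q => w ^ q * E q),
      Finset.sum_range_succ (fun q => (-1 : K) ^ q * E q)]
    have h : (-w) ^ n * (-1) ^ n = w ^ n := by rw [← mul_pow]; simp
    linear_combination (E n) * h

/-- the relative coexact double Poincaré series equals the generating
function (in the fugacity `z`) of the closed-form relative coexact `p`-form
degeneracy generating functions `g_r(p,σ)`, plus `z^d` (coefficient 1 at rank `d`). -/
theorem relative_double_poincare_series
    (d : ℕ) (hd : 1 ≤ d) (dd : Fin d → ℕ) (hdd : ∀ i, 0 < dd i)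
    (K : Type*) [Field K] (z σ : K) (hσ : σ ≠ 0)
    (hσd : ∀ i, σ ^ dd i ≠ 1) (hzσ : 1 + z * σ ≠ 0) :
    (1 + z * σ)⁻¹ * ((∏ i, (z + σ ^ (dd i - 1)) / (1 - σ ^ dd i)) + z ^ (d + 1) * σ) =
      (∑ p ∈ range d, z ^ p *
        ((-1 : K) ^ p *
            (∑ q ∈ range (p + 1), (-1 : K) ^ q *
              ∑ t ∈ powersetCard (d - q) (univ : Finset (Fin d)), ∏ i ∈ t, σ ^ dd i) /
          (σ ^ (d - p) * ∏ i, (1 - σ ^ dd i)))) + z ^ d := by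
  set x : Fin d → K := fun i => σ ^ dd i with hx
  set E : ℕ → K := fun q =>
    ∑ t ∈ powersetCard (d - q) (univ : Finset (Fin d)), ∏ i ∈ t, σ ^ dd i with hE
  set P : K := ∏ i, (1 - σ ^ dd i) with hP
  have hP0 : P ≠ 0 := Finset.prod_ne_zero_iff.mpr fun i _ => sub_ne_zero.mpr (hσd i).symm
  have hEd : E d = 1 := by simp [hE]
  have h1 : ∏ i, (z * σ + σ ^ dd i) = ∑ q ∈ range d, (z * σ) ^ q * E q + (z * σ) ^ d := by
    have := rdps_expand d x (z * σ)
    rw [Finset.sum_range_succ] at this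
    change _ = _ + (z * σ) ^ d * E d at this
    rw [hEd, mul_one] at this
    exact this
  have h2 : (-1) ^ d * P = ∑ q ∈ range d, (-1 : K) ^ q * E q + (-1) ^ d := by
    have := rdps_expand d x (-1)
    rw [Finset.sum_range_succ] at this
    change _ = _ + (-1) ^ d * E d at this
    rw [hEd, mul_one] at this
    refine Eq.trans ?_ this
    have : ∀ i, -1 + x i = (-1) * (1 - σ ^ dd i) := fun i => by simp only [hx]; ring
    simp only [this]
    rw [Finset.prod_mul_distrib]
    simp [hP]
  have h3 := rdps_tele E (z * σ) d
  have h4 : (∏ i, (z + σ ^ (dd i - 1)) / (1 - σ ^ dd i)) =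
      (∏ i, (z * σ + σ ^ dd i)) / (σ ^ d * P) := by
    rw [Finset.prod_div_distrib, div_eq_div_iff hP0 (mul_ne_zero (pow_ne_zero _ hσ) hP0)]
    have : ∏ i, (z * σ + σ ^ dd i) = (∏ i, (z + σ ^ (dd i - 1))) * σ ^ d := by
      have e : ∀ i, z * σ + σ ^ dd i = (z + σ ^ (dd i - 1)) * σ := fun i => by
        rw [add_mul, ← pow_succ, Nat.sub_add_cancel (hdd i)]
      simp only [e]
      rw [Finset.prod_mul_distrib]
      simp
    rw [this]
    ring
  have h5 : (∑ p ∈ range d, z ^ p * ((-1 : K) ^ p * (∑ q ∈ range (p + 1), (-1 : K) ^ q * E q) /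
      (σ ^ (d - p) * P))) = (∑ p ∈ range d, (-(z * σ)) ^ p *
        ∑ q ∈ range (p + 1), (-1 : K) ^ q * E q) / (σ ^ d * P) := by
    rw [Finset.sum_div]
    apply Finset.sum_congr rfl
    intro p hp
    have hs : σ ^ d = σ ^ (d - p) * σ ^ p := by
      rw [← pow_add, Nat.sub_add_cancel (Finset.mem_range.mp hp).le]
    have hn : (-(z * σ)) ^ p = (-1) ^ p * z ^ p * σ ^ p := by
      rw [← mul_pow, ← mul_pow]; ring
    rw [hs, hn]
    field_simp
  rw [h4]
  change _ = (∑ p ∈ range d, z ^ p * ((-1 : K) ^ p *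
    (∑ q ∈ range (p + 1), (-1 : K) ^ q * E q) / (σ ^ (d - p) * P))) + z ^ d
  rw [h5]
  generalize (∑ p ∈ range d, (-(z * σ)) ^ p * ∑ q ∈ range (p + 1), (-1 : K) ^ q * E q) = A at *
  have hm : (-(z * σ)) ^ d * (-1) ^ d = (z * σ) ^ d := by rw [← mul_pow]; simp
  have h6 : ∏ i, (z * σ + σ ^ dd i) = (1 + z * σ) * A + z ^ d * σ ^ d * P := by
    rw [← mul_pow]
    linear_combination h1 - h3 - (-(z * σ)) ^ d * h2 + (P - 1) * hm
  rw [h6, inv_mul_eq_iff_eq_mul₀ hzσ]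
  have hsd : σ ^ d ≠ 0 := pow_ne_zero _ hσ
  field_simp
  ring
end

section
/- Let d ≥ 1 be an integer, let d_1,…,d_d be positive integers, let K be a field and let z, σ ∈ K satisfy z ≠ 0, σ ≠ 0, σ^{d_i} ≠ 1 for all i, z + σ ≠ 0 and 1 + zσ ≠ 0. Then the absolute and relative double Poincaré series satisfy the duality relation G_r(z,σ) = z^{d−1} · ( G_a(1/z, σ) + z ). -/
open Finset

/-- duality between the absolute and relative double Poincaré series:
`G_r(z,σ) = z^(d-1) * (G_a(1/z,σ) + z)`. -/
theorem double_poincare_series_duality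
    (d : ℕ) (hd : 1 ≤ d) (dd : Fin d → ℕ) (hdd : ∀ i, 0 < dd i)
    (K : Type*) [Field K] (z σ : K) (hz : z ≠ 0) (hσ : σ ≠ 0)
    (hσd : ∀ i, σ ^ dd i ≠ 1) (hzσ : z + σ ≠ 0) (hzσ' : 1 + z * σ ≠ 0) :
    (1 + z * σ)⁻¹ * ((∏ i, (z + σ ^ (dd i - 1)) / (1 - σ ^ dd i)) + z ^ (d + 1) * σ) =
      z ^ (d - 1) *
        ((z⁻¹ + σ)⁻¹ * ((∏ i, (1 + z⁻¹ * σ ^ (dd i - 1)) / (1 - σ ^ dd i)) - 1) + z) := by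
  have hP : (∏ i, (z + σ ^ (dd i - 1)) / (1 - σ ^ dd i)) =
      z ^ d * ∏ i, (1 + z⁻¹ * σ ^ (dd i - 1)) / (1 - σ ^ dd i) := by
    have h : z ^ d = ∏ _i : Fin d, z := by simp
    rw [h, ← Finset.prod_mul_distrib]
    refine Finset.prod_congr rfl fun i _ => ?_
    rw [← mul_div_assoc, mul_add, mul_one, mul_inv_cancel_left₀ hz]
  rw [hP]
  generalize (∏ i, (1 + z⁻¹ * σ ^ (dd i - 1)) / (1 - σ ^ dd i)) = P
  obtain ⟨n, rfl⟩ : ∃ n, d = n + 1 := ⟨d - 1, by omega⟩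
  have h2 : (z⁻¹ + σ)⁻¹ = z * (1 + z * σ)⁻¹ := by
    have : z⁻¹ + σ = z⁻¹ * (1 + z * σ) := by
      rw [mul_add, mul_one, inv_mul_cancel_left₀ hz]
    rw [this, mul_inv, inv_inv]
  have h3 : (1 + z * σ)⁻¹ * (1 + z * σ) = 1 := inv_mul_cancel₀ hzσ'
  rw [h2, Nat.add_sub_cancel]
  generalize (1 + z * σ)⁻¹ = Q at *
  linear_combination z ^ (n + 1) * h3
end

section
/- Let d ≥ 1 be an integer, let d_1,…,d_d be positive integers, let K be a field and let σ ∈ K satisfy σ ≠ 0 and σ^{d_i} ≠ 1 for all i (so that also σ^{−d_i} ≠ 1). Then for every 0 ≤ p ≤ d−1, the absolute coexact generating function evaluated at the inverted variable satisfies g_a(p, σ^{−1}) = (−1)^{p+1} σ^{p+1} · [ Σ_{q=0}^{d−1−p} (−1)^q e_{q}(σ^{d_1},…,σ^{d_d}) ] / ∏_{i=1}^d (1−σ^{d_i}). -/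
open Finset

/-- `e_{d-q}` of the inverses is `e_q` divided by the full product. -/
lemma esymm_inv_aux (d : ℕ) (K : Type*) [Field K] (x : Fin d → K) (hx : ∀ i, x i ≠ 0)
    (q : ℕ) (hq : q ≤ d) :
    ∑ t ∈ powersetCard (d - q) (univ : Finset (Fin d)), ∏ i ∈ t, (x i)⁻¹ =
      (∑ t ∈ powersetCard q (univ : Finset (Fin d)), ∏ i ∈ t, x i) * (∏ i, x i)⁻¹ := by
  rw [Finset.sum_mul]
  refine Finset.sum_bij' (fun t _ => tᶜ) (fun t _ => tᶜ) ?_ ?_ ?_ ?_ ?_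
  · intro t ht
    simp only [mem_powersetCard, subset_univ, true_and] at ht ⊢
    rw [card_compl, Fintype.card_fin]
    omega
  · intro t ht
    simp only [mem_powersetCard, subset_univ, true_and] at ht ⊢
    rw [card_compl, Fintype.card_fin]
    omega
  · intro t _
    simp
  · intro t _
    simp
  · intro t _
    have h := Finset.prod_mul_prod_compl t x
    have h1 : ∏ i ∈ tᶜ, x i ≠ 0 := Finset.prod_ne_zero_iff.mpr fun i _ => hx i
    have h2 : ∏ i ∈ t, x i ≠ 0 := Finset.prod_ne_zero_iff.mpr fun i _ => hx i
    rw [← h, Finset.prod_inv_distrib]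
    field_simp

/-- inversion behaviour of the absolute coexact generating function:
`g_a(p, σ⁻¹) = (-1)^(p+1) σ^(p+1) [Σ_{q=0}^{d-1-p} (-1)^q e_q(σ^{d_1},…,σ^{d_d})] / ∏ (1-σ^{d_i})`. -/
theorem absolute_generating_function_inversion
    (d : ℕ) (hd : 1 ≤ d) (dd : Fin d → ℕ) (hdd : ∀ i, 0 < dd i)
    (K : Type*) [Field K] (σ : K) (hσ : σ ≠ 0)
    (hσd : ∀ i, σ ^ dd i ≠ 1) (p : ℕ) (hp : p ≤ d - 1) :
    (-1 : K) ^ (d + 1 + p) *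
        (∑ q ∈ range (d - p), (-1 : K) ^ q *
          ∑ t ∈ powersetCard (d - q) (univ : Finset (Fin d)), ∏ i ∈ t, σ⁻¹ ^ dd i) /
      (σ⁻¹ ^ (p + 1) * ∏ i, (1 - σ⁻¹ ^ dd i)) =
    (-1 : K) ^ (p + 1) * σ ^ (p + 1) *
        (∑ q ∈ range (d - p), (-1 : K) ^ q *
          ∑ t ∈ powersetCard q (univ : Finset (Fin d)), ∏ i ∈ t, σ ^ dd i) /
      ∏ i, (1 - σ ^ dd i) := by
  have hx : ∀ i, σ ^ dd i ≠ 0 := fun i => pow_ne_zero _ hσ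
  have hP : ∏ i, σ ^ dd i ≠ 0 := Finset.prod_ne_zero_iff.mpr fun i _ => hx i
  have hQ : ∏ i, (1 - σ ^ dd i) ≠ 0 :=
    Finset.prod_ne_zero_iff.mpr fun i _ => sub_ne_zero.mpr (hσd i).symm
  have hS : (∑ q ∈ range (d - p), (-1 : K) ^ q *
          ∑ t ∈ powersetCard (d - q) (univ : Finset (Fin d)), ∏ i ∈ t, σ⁻¹ ^ dd i) =
      (∑ q ∈ range (d - p), (-1 : K) ^ q *
          ∑ t ∈ powersetCard q (univ : Finset (Fin d)), ∏ i ∈ t, σ ^ dd i) *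
        (∏ i, σ ^ dd i)⁻¹ := by
    rw [Finset.sum_mul]
    refine Finset.sum_congr rfl fun q hq => ?_
    have hq' : q ≤ d := by
      have := Finset.mem_range.mp hq
      omega
    simp only [inv_pow]
    rw [esymm_inv_aux d K (fun i => σ ^ dd i) hx q hq', mul_assoc]
  have hD : ∏ i, (1 - σ⁻¹ ^ dd i) =
      (-1) ^ d * (∏ i, (1 - σ ^ dd i)) * (∏ i, σ ^ dd i)⁻¹ := by
    have h1 : ∀ i, 1 - σ⁻¹ ^ dd i = (-1) * (1 - σ ^ dd i) * (σ ^ dd i)⁻¹ := by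
      intro i
      have := hx i
      rw [inv_pow]
      field_simp
      ring
    simp only [h1, Finset.prod_mul_distrib, Finset.prod_inv_distrib, Finset.prod_const,
      Finset.card_univ, Fintype.card_fin]
  rw [hS, hD]
  generalize (∑ q ∈ range (d - p), (-1 : K) ^ q *
          ∑ t ∈ powersetCard q (univ : Finset (Fin d)), ∏ i ∈ t, σ ^ dd i) = S
  generalize (∏ i, (1 - σ ^ dd i)) = Q at *
  generalize (∏ i, σ ^ dd i) = P at *
  have hs : ((-1 : K) ^ d) ≠ 0 := pow_ne_zero _ (neg_ne_zero.mpr one_ne_zero)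
  have e : (-1 : K) ^ (d + 1 + p) = (-1) ^ d * (-1) ^ (p + 1) := by
    rw [← pow_add]
    congr 1
    omega
  rw [e, inv_pow]
  generalize (-1 : K) ^ d = s at *
  generalize (-1 : K) ^ (p + 1) = u at *
  have hw : σ ^ (p + 1) ≠ 0 := pow_ne_zero _ hσ
  generalize σ ^ (p + 1) = w at *
  field_simp
end

section
/- Let p ≥ 0 be an integer, set d = 2p+1, and let d_1,…,d_d be positive integers. Let g : ℕ → ℤ be the sequence of coefficients of the formal power series (−1)^{p}·[ Σ_{q=0}^{p} (−1)^q e_{d−q}(X^{d_1},…,X^{d_d}) ] · X^{−(p+1)} · ∏_{i=1}^d (1−X^{d_i})^{−1} in ℤ[[X]] (this is a well-defined power series because every monomial of the numerator has degree at least p+1). Then there exists a function F : ℂ → ℂ such that: (i) F is complex-differentiable at every point of ℂ except possibly the half-odd-integers 1/2, 3/2, …, p+1/2; (ii) for every s ∈ ℂ with Re s > d/2 the series Σ_{l=0}^∞ g(l)·(l+p+1)^{−2s} converges and equals F(s); (iii) F(0) = (−1)^{p+1}/2; and (iv) F(−k) = 0 for every integer k ≥ 1. (Consequently the heat-kernel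 expansion of the middle-rank coexact Laplacian on the fundamental domain of the tesselation of S^d terminates at the constant term, the constant term equals (−1)^{p+1}/2, and all boundary (half-integer) coefficients vanish.) -/
open Finset

namespace MRZ

/-- Shift operator on two-sided sequences. -/
noncomputable def S : Module.End ℤ (ℤ → ℂ) where
  toFun f := fun n => f (n - 1)
  map_add' _ _ := rfl
  map_smul' _ _ := rfl

/-- Reversal of two-sided sequences. -/
noncomputable def R : Module.End ℤ (ℤ → ℂ) where
  toFun f := fun n => f (-n)
  map_add' _ _ := rfl
  map_smul' _ _ := rfl

/-- Action of polynomials in the shift. -/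
noncomputable def act (q : Polynomial ℤ) : Module.End ℤ (ℤ → ℂ) := Polynomial.aeval S q

lemma act_mul (q r : Polynomial ℤ) (f : ℤ → ℂ) : act (q * r) f = act q (act r f) := by
  simp [act]

lemma act_add (q r : Polynomial ℤ) (f : ℤ → ℂ) : act (q + r) f = act q f + act r f := by
  simp [act]

lemma act_sub (q r : Polynomial ℤ) (f : ℤ → ℂ) : act (q - r) f = act q f - act r f := by
  simp [act]

lemma act_sum {ι : Type*} (s : Finset ι) (q : ι → Polynomial ℤ) (f : ℤ → ℂ) :
    act (∑ i ∈ s, q i) f = ∑ i ∈ s, act (q i) f := by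
  simp [act]

lemma act_neg_one_pow_mul (k : ℕ) (q : Polynomial ℤ) (f : ℤ → ℂ) :
    act ((-1) ^ k * q) f = ((-1 : ℤ) ^ k) • act q f := by
  rcases neg_one_pow_eq_or (Polynomial ℤ) k with h | h <;>
  rcases Nat.even_or_odd k with h' | h' <;> simp [act, h'.neg_one_pow]

lemma act_one (f : ℤ → ℂ) : act 1 f = f := by simp [act]

lemma act_X_pow (k : ℕ) (f : ℤ → ℂ) (n : ℤ) : act (Polynomial.X ^ k) f n = f (n - k) := by
  induction k generalizing n with
  | zero => simp [act]
  | succ k ih =>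
    rw [pow_succ', act_mul]
    have : ∀ g : ℤ → ℂ, act Polynomial.X g n = g (n - 1) := by intro g; simp [act, S]
    rw [this, ih]; congr 1; push_cast; ring

/-- Embedding of power series in two-sided sequences. -/
noncomputable def emb (φ : PowerSeries ℤ) : ℤ → ℂ :=
  fun n => if 0 ≤ n then ((PowerSeries.coeff n.toNat φ : ℤ) : ℂ) else 0

lemma emb_add (φ ψ : PowerSeries ℤ) : emb (φ + ψ) = emb φ + emb ψ := by
  funext n; by_cases h : 0 ≤ n <;> simp [emb, h]

lemma emb_mul (q : Polynomial ℤ) (φ : PowerSeries ℤ) :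
    emb ((q : PowerSeries ℤ) * φ) = act q (emb φ) := by
  induction q using Polynomial.induction_on' with
  | add q r hq hr => rw [Polynomial.coe_add, add_mul, emb_add, hq, hr, act_add]
  | monomial k a =>
    funext n
    rw [← Polynomial.C_mul_X_pow_eq_monomial, act_mul]
    have : ∀ g : ℤ → ℂ, act (Polynomial.C a) g n = a * g n := by
      intro g; simp [act]
    rw [this, act_X_pow]
    simp only [emb, Polynomial.coe_mul, Polynomial.coe_C, Polynomial.coe_pow, Polynomial.coe_X]
    rw [mul_assoc, PowerSeries.coeff_C_mul, PowerSeries.coeff_X_pow_mul']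
    by_cases h : 0 ≤ n
    · by_cases h2 : k ≤ n.toNat
      · have h3 : (0 : ℤ) ≤ n - k := by omega
        have h4 : (n - k).toNat = n.toNat - k := by omega
        simp only [h, h2, h3, h4, if_true]; push_cast; rfl
      · have h3 : ¬ (0 : ℤ) ≤ n - k := by omega
        simp only [h, h2, h3, if_true, if_false]; simp
    · have h3 : ¬ (0 : ℤ) ≤ n - k := by omega
      simp only [h, h3, if_false]; simp

lemma act_R_one (k : ℕ) (f : ℤ → ℂ) : act (1 - Polynomial.X ^ k) (R f) =
    - act (Polynomial.X ^ k) (R (act (1 - Polynomial.X ^ k) f)) := by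
  funext n
  rw [act_sub, act_one, act_sub, act_one, Pi.neg_apply]
  rw [Pi.sub_apply, act_X_pow, act_X_pow]
  simp only [R, LinearMap.coe_mk, AddHom.coe_mk, Pi.sub_apply, act_X_pow]
  rw [show -(n - (k : ℤ)) - k = -n by ring]; ring

lemma act_R {ι : Type*} [DecidableEq ι] (s : Finset ι) (e : ι → ℕ) (f : ℤ → ℂ) :
    act (∏ i ∈ s, (1 - Polynomial.X ^ e i)) (R f) = ((-1 : ℤ) ^ s.card) •
      act (Polynomial.X ^ (∑ i ∈ s, e i)) (R (act (∏ i ∈ s, (1 - Polynomial.X ^ e i)) f)) := by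
  induction s using Finset.induction_on with
  | empty => simp [act_one]
  | insert a s ha ih =>
    rw [prod_insert ha, sum_insert ha, card_insert_of_notMem ha, act_mul, ih, map_smul,
      ← act_mul, mul_comm, act_mul, act_R_one, map_neg, ← act_mul, ← act_mul, pow_succ, pow_add]
    rw [mul_comm (Polynomial.X ^ e a)]
    simp

lemma act_refl (m k : ℕ) (f : ℤ → ℂ) (hf : R f = f) :
    act (Polynomial.X ^ (m + k)) (R (act (Polynomial.X ^ k) f)) = act (Polynomial.X ^ m) f := by
  funext n
  simp only [act_X_pow]
  conv_rhs => rw [← hf]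
  simp only [R, LinearMap.coe_mk, AddHom.coe_mk, act_X_pow]
  congr 1; push_cast; ring

/-- Elementary symmetric polynomial in the `X ^ dd i`. -/
noncomputable def es {d : ℕ} (dd : Fin d → ℕ) (q : ℕ) : Polynomial ℤ :=
  ∑ t ∈ powersetCard q (univ : Finset (Fin d)), ∏ i ∈ t, Polynomial.X ^ dd i

lemma act_es {d : ℕ} (dd : Fin d → ℕ) (q : ℕ) (hq : q ≤ d) (f : ℤ → ℂ) (hf : R f = f) :
    act (Polynomial.X ^ (∑ i, dd i)) (R (act (es dd (d - q)) f)) = act (es dd q) f := by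
  simp only [es, act_sum, map_sum]
  refine Finset.sum_nbij' (fun t => tᶜ) (fun t => tᶜ) ?_ ?_ (by simp) (by simp) ?_
  · intro t ht
    simp only [mem_powersetCard, subset_univ, true_and, card_compl, Fintype.card_fin] at ht ⊢
    omega
  · intro t ht
    simp only [mem_powersetCard, subset_univ, true_and, card_compl, Fintype.card_fin] at ht ⊢
    omega
  · intro t _
    rw [prod_pow_eq_pow_sum, prod_pow_eq_pow_sum, ← sum_compl_add_sum t]
    exact act_refl _ _ f hf

lemma prod_es {d : ℕ} (dd : Fin d → ℕ) :
    ∏ i, (1 - Polynomial.X ^ dd i) = ∑ q ∈ range (d + 1), (-1) ^ q * es dd q := by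
  simp_rw [sub_eq_add_neg]
  rw [prod_one_add, sum_powerset]
  simp only [card_univ, Fintype.card_fin]
  refine sum_congr rfl fun q _ => ?_
  rw [es, mul_sum]
  refine sum_congr rfl fun t ht => ?_
  rw [prod_neg, (mem_powersetCard.1 ht).2]

lemma poly_id (p d : ℕ) (hd : d = 2 * p + 1) (dd : Fin d → ℕ) :
    (∑ q ∈ range (p + 1), (-1) ^ q * es dd (d - q)) - (∑ q ∈ range (p + 1), (-1) ^ q * es dd q)
      + ∏ i, (1 - Polynomial.X ^ dd i) = 0 := by
  rw [prod_es, show d + 1 = (p + 1) + (p + 1) by omega,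
    sum_range_add (fun q => (-1) ^ q * es dd q) (p + 1) (p + 1)]
  rw [← sum_range_reflect (fun x => (-1) ^ (p + 1 + x) * es dd (p + 1 + x))]
  have : ∀ q ∈ range (p + 1), (-1 : Polynomial ℤ) ^ (p + 1 + (p + 1 - 1 - q)) * es dd (p + 1 + (p + 1 - 1 - q))
      = - ((-1) ^ q * es dd (d - q)) := by
    intro q hq
    rw [mem_range] at hq
    have h1 : p + 1 + (p + 1 - 1 - q) = d - q := by omega
    rw [h1]
    have h2 : (-1 : Polynomial ℤ) ^ (d - q) = - (-1) ^ q := by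
      have h3 : (-1 : Polynomial ℤ) ^ (d - q) * (-1) ^ q = -1 := by
        rw [← pow_add, Nat.sub_add_cancel (by omega), hd]; simp [pow_succ]
      have h4 : (-1 : Polynomial ℤ) ^ q * (-1) ^ q = 1 := by
        rw [← mul_pow]; simp
      linear_combination (-1 : Polynomial ℤ) ^ q * h3 - (-1 : Polynomial ℤ) ^ (d - q) * h4
    rw [h2]; ring
  rw [sum_congr rfl this, sum_neg_distrib]; ring

lemma key (p d : ℕ) (hd : d = 2 * p + 1) (dd : Fin d → ℕ) (A : PowerSeries ℤ)
    (hA : A * (∏ i, (1 - PowerSeries.X ^ dd i)) =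
      (-1 : PowerSeries ℤ) ^ p *
        ∑ q ∈ range (p + 1), (-1 : PowerSeries ℤ) ^ q *
          ∑ t ∈ powersetCard (d - q) (univ : Finset (Fin d)),
            ∏ i ∈ t, PowerSeries.X ^ dd i) :
    act (∏ i, (1 - Polynomial.X ^ dd i)) (emb A + R (emb A) + ((-1 : ℤ) ^ p) • emb 1) = 0 := by
  have hR1 : R (emb 1) = emb 1 := by
    funext n
    simp only [R, LinearMap.coe_mk, AddHom.coe_mk, emb, PowerSeries.coeff_one]
    split_ifs <;> first | rfl | omega | simp
  have h1 : act (∏ i, (1 - Polynomial.X ^ dd i)) (emb A) =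
      ((-1 : ℤ) ^ p) • ∑ q ∈ range (p + 1), ((-1 : ℤ) ^ q) • act (es dd (d - q)) (emb 1) := by
    rw [← emb_mul]
    have : ((∏ i, (1 - Polynomial.X ^ dd i) : Polynomial ℤ) : PowerSeries ℤ) * A =
        (((-1) ^ p * ∑ q ∈ range (p + 1), (-1) ^ q * es dd (d - q) : Polynomial ℤ) : PowerSeries ℤ) * 1 := by
      simp only [← Polynomial.coeToPowerSeries.ringHom_apply, es, map_mul, map_prod, map_sum,
        map_pow, map_neg, map_one, map_sub]
      simp only [Polynomial.coeToPowerSeries.ringHom_apply, Polynomial.coe_X]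
      rw [mul_comm, hA, mul_one]
    rw [this, emb_mul, act_neg_one_pow_mul, act_sum]
    simp only [act_neg_one_pow_mul]
  have h2 := act_R univ dd (emb A)
  rw [h1] at h2
  simp only [map_smul, map_sum] at h2
  have h3 : ∑ q ∈ range (p + 1), ((-1 : ℤ) ^ q) •
      act (Polynomial.X ^ (∑ i, dd i)) (R (act (es dd (d - q)) (emb 1))) =
      ∑ q ∈ range (p + 1), ((-1 : ℤ) ^ q) • act (es dd q) (emb 1) := by
    refine sum_congr rfl fun q hq => ?_
    rw [mem_range] at hq
    rw [act_es dd q (by omega) _ hR1]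
  rw [h3] at h2
  have h4 : ((-1 : ℤ) ^ (univ : Finset (Fin d)).card) = -1 := by
    rw [card_univ, Fintype.card_fin, hd]; simp [pow_succ]
  rw [h4] at h2
  have h5 := congrArg (fun q => act q (emb 1)) (poly_id p d hd dd)
  simp only [act_add, act_sub, act_sum, act_neg_one_pow_mul] at h5
  have h0 : act 0 (emb 1) = 0 := by simp [act]
  rw [h0] at h5
  rw [map_add, map_add, map_smul, h1, h2, neg_one_smul, ← sub_eq_add_neg, ← smul_sub, ← smul_add,
    h5, smul_zero]

lemma antidiff (N : ℕ) (hN : N ≠ 0) (j : ℕ) : ∃ Q : Polynomial ℂ, Q.natDegree < j + 2 ∧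
    ∀ x : ℂ, Q.eval x - Q.eval (x - N) = x ^ j := by
  have hN' : (N : ℂ) ≠ 0 := by exact_mod_cast hN
  set B : Polynomial ℂ := (Polynomial.bernoulli (j + 1)).map (algebraMap ℚ ℂ) with hB
  have hdeg : B.natDegree ≤ j + 1 := by
    refine Polynomial.natDegree_map_le.trans ?_
    refine Polynomial.natDegree_le_iff_coeff_eq_zero.2 fun i hi => ?_
    rw [Polynomial.coeff_bernoulli, if_neg (by omega)]
  have hcomp : ∀ y : ℂ, B.eval (1 + y) = B.eval y + (j + 1) * y ^ j := by
    intro y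
    have := congrArg (fun q => (q.map (algebraMap ℚ ℂ)).eval y)
      (Polynomial.bernoulli_comp_one_add_X (j + 1))
    simpa [Polynomial.map_comp, ← hB] using this
  refine ⟨Polynomial.C ((N : ℂ) ^ j / (j + 1)) *
    B.comp (Polynomial.C (N : ℂ)⁻¹ * Polynomial.X + Polynomial.C 1), ?_, ?_⟩
  · refine lt_of_le_of_lt (Polynomial.natDegree_C_mul_le _ _) ?_
    refine lt_of_le_of_lt Polynomial.natDegree_comp_le ?_
    have := Polynomial.natDegree_linear_le (a := (N : ℂ)⁻¹) (b := 1)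
    nlinarith
  · intro x
    have h1 : (j : ℂ) + 1 ≠ 0 := by exact_mod_cast Nat.succ_ne_zero j
    simp only [Polynomial.eval_mul, Polynomial.eval_C, Polynomial.eval_comp, Polynomial.eval_add,
      Polynomial.eval_X]
    rw [show (N : ℂ)⁻¹ * (x - N) + 1 = (N : ℂ)⁻¹ * x by field_simp; ring,
      add_comm ((N : ℂ)⁻¹ * x) (1 : ℂ), hcomp, mul_pow, inv_pow]
    field_simp
    ring

lemma quasi (N : ℕ) [NeZero N] (d : ℕ) (b : ℤ → ℂ)
    (hb : act ((1 - Polynomial.X ^ N) ^ d) b = 0) :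
    ∃ c : ℕ → ZMod N → ℂ, ∀ n : ℤ, b n = ∑ j ∈ range d, c j n * (n : ℂ) ^ j := by
  induction d generalizing b with
  | zero =>
    rw [pow_zero, act_one] at hb
    exact ⟨0, fun n => by simp [hb]⟩
  | succ d ih =>
    rw [pow_succ, act_mul] at hb
    obtain ⟨c, hc⟩ := ih _ hb
    choose Q hQ1 hQ2 using antidiff N (NeZero.ne N)
    set H : ℤ → ℂ := fun n => ∑ i ∈ range (d + 1),
      (∑ j ∈ range d, c j n * (Q j).coeff i) * (n : ℂ) ^ i with hH
    have hH' : ∀ n : ℤ, H n = ∑ j ∈ range d, c j n * (Q j).eval (n : ℂ) := by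
      intro n
      simp only [hH, sum_mul]
      rw [sum_comm]
      refine sum_congr rfl fun j hj => ?_
      rw [mem_range] at hj
      rw [Polynomial.eval_eq_sum_range' (lt_of_lt_of_le (hQ1 j) (by omega : j + 2 ≤ d + 1)),
        mul_sum]
      exact sum_congr rfl fun i _ => by ring
    have hper : Function.Periodic (fun n => b n - H n) (N : ℤ) := by
      intro n
      have h1 := hc (n + N)
      rw [act_sub, act_one, Pi.sub_apply, act_X_pow, add_sub_cancel_right] at h1
      have h2 : H (n + N) - H n = ∑ j ∈ range d, c j ((n + N : ℤ) : ZMod N) * ((n + N : ℤ) : ℂ) ^ j := by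
        rw [hH', hH', ← sum_sub_distrib]
        refine sum_congr rfl fun j _ => ?_
        rw [← hQ2 j]
        push_cast
        simp only [CharP.cast_eq_zero, add_zero, add_sub_cancel_right]
        ring
      simp only
      linear_combination h1 - h2
    refine ⟨fun i r => (∑ j ∈ range d, c j r * (Q j).coeff i) +
      if i = 0 then b (r.val : ℤ) - H (r.val : ℤ) else 0, fun n => ?_⟩
    have h3 : b n - H n = b (((n : ZMod N).val : ℕ) : ℤ) - H (((n : ZMod N).val : ℕ) : ℤ) := by
      rw [ZMod.val_intCast]
      have := hper.sub_zsmul_eq (x := n) (n / N)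
      rw [← this, Int.emod_def]
      simp [mul_comm]
    simp only [add_mul, sum_add_distrib, ite_mul, zero_mul]
    rw [sum_ite_eq' (range (d + 1)) 0, if_pos (by simp), pow_zero, mul_one, ← h3]
    change b n = H n + _
    ring

lemma quasi_even (N : ℕ) [NeZero N] (d : ℕ) (b : ℤ → ℂ)
    (hb : act ((1 - Polynomial.X ^ N) ^ d) b = 0) (he : ∀ n, b (-n) = b n) :
    ∃ c : ℕ → ZMod N → ℂ, (∀ j r, c j (-r) = (-1) ^ j * c j r) ∧
      ∀ n : ℤ, b n = ∑ j ∈ range d, c j n * (n : ℂ) ^ j := by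
  obtain ⟨c, hc⟩ := quasi N d b hb
  have hs : ∀ j : ℕ, ((-1 : ℂ) ^ j) * (-1) ^ j = 1 := fun j => by rw [← mul_pow]; simp
  refine ⟨fun j r => (c j r + (-1) ^ j * c j (-r)) / 2, fun j r => ?_, fun n => ?_⟩
  · simp only [neg_neg]
    linear_combination (-(c j (-r)) / 2) * hs j
  · have h1 := hc n
    have h2 := hc (-n)
    rw [he] at h2
    have : b n = (b n + b n) / 2 := by ring
    rw [this]
    conv_lhs => rw [h2]
    rw [← h2]
    nth_rewrite 1 [h2]
    rw [h1, ← sum_add_distrib, sum_div]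
    refine sum_congr rfl fun j _ => ?_
    push_cast
    rw [neg_pow (n : ℂ)]
    ring

lemma analytic (p d : ℕ) (hd : d = 2 * p + 1) (N : ℕ) [NeZero N] (g : ℕ → ℤ) (b : ℤ → ℂ)
    (c : ℕ → ZMod N → ℂ) (hpar : ∀ j r, c j (-r) = (-1) ^ j * c j r)
    (hc : ∀ n : ℤ, b n = ∑ j ∈ range d, c j n * (n : ℂ) ^ j)
    (hb0 : b 0 = (-1) ^ p) (hb1 : ∀ n : ℕ, n ≠ 0 → n < p + 1 → b n = 0)
    (hb2 : ∀ l : ℕ, b ((l + (p + 1) : ℕ) : ℤ) = g l) :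
    ∃ F : ℂ → ℂ,
      (∀ s : ℂ, (∀ k : ℕ, k ≤ p → s ≠ (k : ℂ) + 1 / 2) → DifferentiableAt ℂ F s) ∧
      (∀ s : ℂ, (d : ℝ) / 2 < s.re →
        HasSum (fun l : ℕ => (g l : ℂ) * ((l : ℂ) + (p : ℂ) + 1) ^ (-(2 * s))) (F s)) ∧
      F 0 = (-1 : ℂ) ^ (p + 1) / 2 ∧
      (∀ k : ℕ, 1 ≤ k → F (-(k : ℂ)) = 0) := by
  have heven : ∀ j, Even j → (c j).Even := fun j hj r => by rw [hpar, hj.neg_one_pow, one_mul]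
  have hodd : ∀ j, Odd j → (c j).Odd := fun j hj r => by
    rw [hpar, hj.neg_one_pow, neg_one_mul]
  have hval : ∀ j k : ℕ, j + k ≠ 0 → ZMod.LFunction (c j) (2 * (-(k : ℂ)) - j) = 0 := by
    intro j k hjk
    rcases Nat.even_or_odd' j with ⟨m, hm | hm⟩
    · obtain ⟨n, hn⟩ : ∃ n, m + k = n + 1 := ⟨m + k - 1, by omega⟩
      rw [← ZMod.LFunction_neg_two_mul_nat_add_one (heven j ⟨m, by omega⟩) n]
      congr 1
      have : (m : ℂ) + k = n + 1 := by exact_mod_cast hn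
      rw [← this, hm]; push_cast; ring
    · rw [← ZMod.LFunction_neg_two_mul_nat_sub_one (hodd j ⟨m, by omega⟩) (m + k)]
      congr 1
      rw [hm]; push_cast; ring
  refine ⟨fun s => ∑ j ∈ range d, ZMod.LFunction (c j) (2 * s - j), ?_, ?_, ?_, ?_⟩
  · intro s hs
    refine DifferentiableAt.fun_sum fun j hj => ?_
    rw [mem_range] at hj
    have hL : DifferentiableAt ℂ (ZMod.LFunction (c j)) (2 * s - j) := by
      refine ZMod.differentiableAt_LFunction _ _ ?_
      rcases Nat.even_or_odd' j with ⟨m, hm | hm⟩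
      · left
        intro h
        refine hs m (by omega) ?_
        rw [hm] at h; push_cast at h
        linear_combination h / 2
      · right
        exact (hodd j ⟨m, by omega⟩).sum_eq_zero
    exact DifferentiableAt.fun_comp' s hL (by fun_prop)
  · intro s hs
    have hsum : HasSum (fun n : ℕ => ∑ j ∈ range d,
        LSeries.term (fun n => c j (n : ZMod N)) (2 * s - j) n)
        (∑ j ∈ range d, ZMod.LFunction (c j) (2 * s - j)) := by
      refine hasSum_sum fun j hj => ?_
      rw [mem_range] at hj
      have hre : 1 < (2 * s - j).re := by
        have h1 : (j : ℝ) + 1 ≤ d := by exact_mod_cast hj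
        simp
        linarith
      rw [ZMod.LFunction_eq_LSeries _ hre]
      exact (ZMod.LSeriesSummable_of_one_lt_re (c j) hre).hasSum
    have hterm : ∀ n : ℕ, n ≠ 0 → ∑ j ∈ range d,
        LSeries.term (fun n => c j (n : ZMod N)) (2 * s - j) n = b n * (n : ℂ) ^ (-(2 * s)) := by
      intro n hn
      have hn' : (n : ℂ) ≠ 0 := by exact_mod_cast hn
      rw [hc, sum_mul]
      refine sum_congr rfl fun j _ => ?_
      rw [LSeries.term_of_ne_zero hn, div_eq_mul_inv, ← Complex.cpow_neg,
        show -(2 * s - (j : ℂ)) = j + -(2 * s) by ring, Complex.cpow_add _ _ hn',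
        Complex.cpow_natCast]
      push_cast
      ring
    have hinj : Function.Injective (fun l : ℕ => l + (p + 1)) := add_left_injective _
    rw [← hinj.hasSum_iff] at hsum
    · convert hsum using 2 with l
      simp only [Function.comp]
      rw [hterm _ (by omega), hb2]
      push_cast
      ring_nf
    · intro n hn
      rcases eq_or_ne n 0 with rfl | h0
      · simp
      · rw [hterm n h0, hb1 n h0, zero_mul]
        by_contra h
        exact hn ⟨n - (p + 1), by simp; omega⟩
  · simp only
    rw [sum_eq_single 0]
    · have h1 := hc 0
      rw [sum_eq_single 0 (fun j _ hj => by simp [hj]) (fun h => by simp [hd] at h)] at h1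
      simp only [Int.cast_zero, pow_zero, mul_one, hb0] at h1
      simp only [Nat.cast_zero, mul_zero, sub_zero]
      rw [ZMod.LFunction_apply_zero_of_even (heven 0 (by simp)), ← h1]
      ring
    · intro j _ hj
      simpa using hval j 0 (by omega)
    · intro h; simp [hd] at h
  · intro k hk
    exact sum_eq_zero fun j _ => hval j k (by omega)

end MRZ

/-- the coexact middle-rank ζ-function `F(s) = Σ_l g(l) (l+p+1)^{-2s}`
(for `d = 2p+1` and degeneracies `g` given by the Taylor coefficients of the
closed-form generating function) extends to a function holomorphic away from the
half-odd-integers `1/2, …, p+1/2`, with `F(0) = (−1)^{p+1}/2` and `F(−k) = 0` for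
all integers `k ≥ 1`. -/
theorem middle_rank_zeta_values
    (p d : ℕ) (hd : d = 2 * p + 1) (dd : Fin d → ℕ) (hdd : ∀ i, 0 < dd i)
    (g : ℕ → ℤ)
    (hg : (PowerSeries.mk fun n => g n) * PowerSeries.X ^ (p + 1) *
        (∏ i, (1 - PowerSeries.X ^ dd i)) =
      (-1 : PowerSeries ℤ) ^ p *
        ∑ q ∈ range (p + 1), (-1 : PowerSeries ℤ) ^ q *
          ∑ t ∈ powersetCard (d - q) (univ : Finset (Fin d)),
            ∏ i ∈ t, PowerSeries.X ^ dd i) :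
    ∃ F : ℂ → ℂ,
      (∀ s : ℂ, (∀ k : ℕ, k ≤ p → s ≠ (k : ℂ) + 1 / 2) → DifferentiableAt ℂ F s) ∧
      (∀ s : ℂ, (d : ℝ) / 2 < s.re →
        HasSum (fun l : ℕ => (g l : ℂ) * ((l : ℂ) + (p : ℂ) + 1) ^ (-(2 * s))) (F s)) ∧
      F 0 = (-1 : ℂ) ^ (p + 1) / 2 ∧
      (∀ k : ℕ, 1 ≤ k → F (-(k : ℂ)) = 0) := by
  obtain ⟨A, hA⟩ : ∃ A : PowerSeries ℤ, A = (PowerSeries.mk fun n => g n) * PowerSeries.X ^ (p + 1) :=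
    ⟨_, rfl⟩
  rw [← hA] at hg
  have hkey := MRZ.key p d hd dd A hg
  have hcoe : ∀ n : ℕ, PowerSeries.coeff n A = if p + 1 ≤ n then g (n - (p + 1)) else 0 := by
    intro n
    rw [hA, PowerSeries.coeff_mul_X_pow']
    simp
  set b : ℤ → ℂ := MRZ.emb A + MRZ.R (MRZ.emb A) + ((-1 : ℤ) ^ p) • MRZ.emb 1 with hb
  have hbn : ∀ n : ℤ, b n = MRZ.emb A n + MRZ.emb A (-n) + (-1) ^ p * MRZ.emb 1 n := by
    intro n
    simp [hb, MRZ.R]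
  have hone : ∀ n : ℤ, MRZ.emb 1 n = if n = 0 then 1 else 0 := by
    intro n
    simp only [MRZ.emb, PowerSeries.coeff_one]
    split_ifs <;> first | omega | simp
  have hpos : ∀ n : ℕ, n ≠ 0 → b n = ((PowerSeries.coeff n A : ℤ) : ℂ) := by
    intro n hn
    rw [hbn, hone, if_neg (by omega)]
    simp [MRZ.emb, hn]
  have hN : (∏ i, dd i) ≠ 0 := Finset.prod_ne_zero_iff.2 fun i _ => (hdd i).ne'
  haveI : NeZero (∏ i, dd i) := ⟨hN⟩
  have hann : MRZ.act ((1 - Polynomial.X ^ (∏ i, dd i)) ^ d) b = 0 := by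
    have hdvd : (∏ i, (1 - Polynomial.X ^ dd i) : Polynomial ℤ) ∣
        (1 - Polynomial.X ^ (∏ i, dd i)) ^ d := by
      have h1 : ∏ _i : Fin d, (1 - Polynomial.X ^ (∏ i, dd i) : Polynomial ℤ) =
          (1 - Polynomial.X ^ (∏ i, dd i)) ^ d := by simp
      rw [← h1]
      refine Finset.prod_dvd_prod_of_dvd _ _ fun i _ => ?_
      obtain ⟨m, hm⟩ := Finset.dvd_prod_of_mem dd (Finset.mem_univ i)
      rw [hm, pow_mul]
      simpa using sub_dvd_pow_sub_pow (1 : Polynomial ℤ) (Polynomial.X ^ dd i) m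
    obtain ⟨r, hr⟩ := hdvd
    rw [hr, mul_comm, MRZ.act_mul, hkey, map_zero]
  have he : ∀ n, b (-n) = b n := by
    intro n
    rw [hbn, hbn, neg_neg, hone, hone]
    simp only [neg_eq_zero]
    ring
  obtain ⟨c, hpar, hc⟩ := MRZ.quasi_even _ d b hann he
  refine MRZ.analytic p d hd _ g b c hpar hc ?_ ?_ ?_
  · rw [hbn, hone]
    simp [MRZ.emb, hcoe, -PowerSeries.coeff_zero_eq_constantCoeff]
  · intro n hn hlt
    rw [hpos n hn, hcoe, if_neg (by omega), Int.cast_zero]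
  · intro l
    rw [hpos _ (by omega), hcoe, if_pos (by omega), Nat.add_sub_cancel]
end

section
/- Let d ≥ 1 be an integer. Then the following two identities hold in the polynomial ring ℤ[z,σ]: (a) (z+σ) · Σ_{p=0}^{d−1} z^p · Σ_{m=p+1}^{d} C(m−1,p)·(1−σ)^{d−m} = (1+z)^d − (1−σ)^d ; (b) (1+zσ) · [ Σ_{p=0}^{d−1} z^p · Σ_{m=d−p}^{d} C(m−1,d−p−1)·(1−σ)^{d−m} + z^d (1−σ)^d ] = (1+z)^d + z^{d+1} σ (1−σ)^d. (These identify the hemisphere absolute and relative coexact double Poincaré series with their explicit product forms.) -/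
open Finset

theorem inner_aux {R : Type*} [CommRing R] (y : R) (d p : ℕ) :
    ∑ m ∈ Icc (p + 1) d, ((m - 1).choose p : R) * y ^ (d - m) =
      ∑ k ∈ range d, (k.choose p : R) * y ^ (d - 1 - k) := by
  have h1 : ∑ m ∈ Icc (p + 1) d, ((m - 1).choose p : R) * y ^ (d - m) =
      ∑ m ∈ Ico 1 (d + 1), ((m - 1).choose p : R) * y ^ (d - m) := by
    apply Finset.sum_subset
    · intro m hm
      simp only [mem_Icc, mem_Ico] at *
      omega
    · intro m hm hm'
      simp only [mem_Icc, mem_Ico] at *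
      rw [Nat.choose_eq_zero_of_lt (by omega)]
      simp
  rw [h1, Finset.sum_Ico_eq_sum_range]
  apply Finset.sum_congr (by simp)
  intro k hk
  rw [show 1 + k - 1 = k by omega, show d - (1 + k) = d - 1 - k by omega]

theorem binom_aux {R : Type*} [CommRing R] (z : R) (d k : ℕ) (hk : k < d) :
    ∑ p ∈ range d, z ^ p * (k.choose p : R) = (1 + z) ^ k := by
  rw [add_comm, add_pow]
  symm
  simp only [one_pow, mul_one]
  apply Finset.sum_subset
  · intro m hm
    simp only [mem_range] at *
    omega
  · intro m hm hm'
    simp only [mem_range] at *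
    rw [Nat.choose_eq_zero_of_lt (by omega)]
    simp

theorem binom_aux' {R : Type*} [CommRing R] (z : R) (d k : ℕ) (hk : k < d) :
    ∑ p ∈ range d, z ^ (d - 1 - p) * (k.choose p : R) = z ^ (d - 1 - k) * (1 + z) ^ k := by
  rw [add_pow, Finset.mul_sum]
  simp only [one_pow, one_mul]
  rw [← Finset.sum_subset (s₁ := range (k + 1)) (s₂ := range d)]
  · apply Finset.sum_congr rfl
    intro p hp
    simp only [mem_range] at hp
    rw [← mul_assoc, ← pow_add, show d - 1 - k + (k - p) = d - 1 - p by omega]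
  · intro m hm
    simp only [mem_range] at *
    omega
  · intro m hm hm'
    simp only [mem_range] at *
    rw [Nat.choose_eq_zero_of_lt (by omega)]
    simp

theorem abs_aux {R : Type*} [CommRing R] (z y : R) (d : ℕ) :
    ∑ p ∈ range d, z ^ p * ∑ m ∈ Icc (p + 1) d, ((m - 1).choose p : R) * y ^ (d - m) =
      ∑ k ∈ range d, (1 + z) ^ k * y ^ (d - 1 - k) := by
  simp only [inner_aux, Finset.mul_sum]
  rw [Finset.sum_comm]
  apply Finset.sum_congr rfl
  intro k hk
  rw [← binom_aux z d k (mem_range.1 hk), Finset.sum_mul]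
  simp only [mul_assoc]

theorem rel_aux {R : Type*} [CommRing R] (z y : R) (d : ℕ) :
    ∑ p ∈ range d, z ^ p *
      ∑ m ∈ Icc (d - p) d, ((m - 1).choose (d - p - 1) : R) * y ^ (d - m) =
      ∑ k ∈ range d, (1 + z) ^ k * (z * y) ^ (d - 1 - k) := by
  rw [← Finset.sum_range_reflect]
  have : ∀ p ∈ range d, z ^ (d - 1 - p) *
      ∑ m ∈ Icc (d - (d - 1 - p)) d,
        ((m - 1).choose (d - (d - 1 - p) - 1) : R) * y ^ (d - m) =
      ∑ k ∈ range d, z ^ (d - 1 - p) * ((k.choose p : R) * y ^ (d - 1 - k)) := by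
    intro p hp
    simp only [mem_range] at hp
    rw [show d - (d - 1 - p) = p + 1 by omega, show p + 1 - 1 = p by omega, inner_aux,
      Finset.mul_sum]
  rw [Finset.sum_congr rfl this, Finset.sum_comm]
  apply Finset.sum_congr rfl
  intro k hk
  simp only [← mul_assoc]
  rw [← Finset.sum_mul, binom_aux' z d k (mem_range.1 hk), mul_pow]
  ring

/-- the hemisphere absolute and relative coexact double Poincaré series,
cleared of denominators, as identities in the polynomial ring `ℤ[z,σ]`. -/
theorem hemisphere_double_poincare_identities (d : ℕ) (hd : 1 ≤ d) :
    ((MvPolynomial.X 0 + MvPolynomial.X 1 : MvPolynomial (Fin 2) ℤ) *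
        ∑ p ∈ range d, (MvPolynomial.X 0 : MvPolynomial (Fin 2) ℤ) ^ p *
          ∑ m ∈ Icc (p + 1) d, ((m - 1).choose p : MvPolynomial (Fin 2) ℤ) *
            (1 - MvPolynomial.X 1) ^ (d - m) =
      (1 + MvPolynomial.X 0 : MvPolynomial (Fin 2) ℤ) ^ d -
        (1 - MvPolynomial.X 1) ^ d) ∧
    ((1 + MvPolynomial.X 0 * MvPolynomial.X 1 : MvPolynomial (Fin 2) ℤ) *
        ((∑ p ∈ range d, (MvPolynomial.X 0 : MvPolynomial (Fin 2) ℤ) ^ p *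
            ∑ m ∈ Icc (d - p) d, ((m - 1).choose (d - p - 1) : MvPolynomial (Fin 2) ℤ) *
              (1 - MvPolynomial.X 1) ^ (d - m)) +
          (MvPolynomial.X 0 : MvPolynomial (Fin 2) ℤ) ^ d *
            (1 - MvPolynomial.X 1) ^ d) =
      (1 + MvPolynomial.X 0 : MvPolynomial (Fin 2) ℤ) ^ d +
        (MvPolynomial.X 0 : MvPolynomial (Fin 2) ℤ) ^ (d + 1) * MvPolynomial.X 1 *
          (1 - MvPolynomial.X 1) ^ d) := by
  constructor
  · rw [abs_aux, ← (Commute.all _ _).mul_geom_sum₂]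
    ring
  · rw [rel_aux, mul_add]
    have h := (Commute.all (1 + MvPolynomial.X 0 : MvPolynomial (Fin 2) ℤ)
      (MvPolynomial.X 0 * (1 - MvPolynomial.X 1))).mul_geom_sum₂ d
    rw [mul_pow (MvPolynomial.X 0 : MvPolynomial (Fin 2) ℤ) (1 - MvPolynomial.X 1) d] at h
    linear_combination h
end

section
/- Let d ≥ 1, 0 ≤ p ≤ d−1 and l ≥ 0 be integers. Then the sum of the absolute and relative hemisphere coexact degeneracies equals the coexact p-form degeneracy on the full sphere S^d: Σ_{m=p+1}^{d} C(m−1,p)·C(l+m−1, m−1) + Σ_{m=d−p}^{d} C(m−1,d−p−1)·C(l+m−1, m−1) = [ (l+d)! / ( p!·(d−p−1)!·l! ) ] · ( 1/(l+1+p) + 1/(l+d−p) ) (an identity of rational numbers). -/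
open Finset

theorem hemi_term (l p j : ℕ) :
    ((p + j).choose p : ℚ) * ((l + (p + j)).choose (p + j) : ℚ) =
      ((l + p + j).factorial : ℚ) / (p.factorial * j.factorial * l.factorial) := by
  rw [Nat.cast_choose ℚ (Nat.le_add_right p j), Nat.cast_choose ℚ (Nat.le_add_left (p + j) l)]
  have h1 : p + j - p = j := by omega
  have h2 : l + (p + j) - (p + j) = l := by omega
  rw [h1, h2, add_assoc]
  have := Nat.factorial_ne_zero (p + j)
  field_simp

theorem hemi_sum (l p q : ℕ) :
    (∑ m ∈ Icc (p + 1) (p + q + 1),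
      ((m - 1).choose p : ℚ) * ((l + m - 1).choose (m - 1) : ℚ)) =
    ((l + (p + q + 1)).factorial : ℚ) / (p.factorial * q.factorial * l.factorial) *
      (1 / ((l : ℚ) + 1 + p)) := by
  have hne : (l : ℚ) + 1 + p ≠ 0 := by positivity
  induction q with
  | zero =>
    have h := hemi_term l p 0
    simp only [add_zero] at h
    simp only [add_zero, Icc_self, sum_singleton, Nat.add_sub_cancel, ← add_assoc]
    rw [h, Nat.factorial_succ]
    push_cast
    field_simp
    ring
  | succ q ih =>
    rw [show p + (q + 1) + 1 = (p + q + 1) + 1 by ring, sum_Icc_succ_top (by omega), ih]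
    have h := hemi_term l p (q + 1)
    have e1 : p + q + 1 + 1 - 1 = p + (q + 1) := by omega
    have e2 : l + (p + q + 1 + 1) - 1 = l + (p + (q + 1)) := by omega
    rw [e1, e2, h]
    rw [show l + (p + q + 1 + 1) = (l + (p + q + 1)) + 1 by ring,
      show l + p + (q + 1) = l + (p + q + 1) by ring, Nat.factorial_succ (l + (p + q + 1)),
      Nat.factorial_succ q]
    push_cast
    field_simp
    ring

/-- the sum of the absolute and relative hemisphere coexact degeneracies
equals the coexact `p`-form degeneracy on the full sphere `S^d`. -/
theorem hemisphere_degeneracies_sum_to_sphere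
    (d p l : ℕ) (hd : 1 ≤ d) (hp : p ≤ d - 1) :
    (∑ m ∈ Icc (p + 1) d, ((m - 1).choose p : ℚ) * ((l + m - 1).choose (m - 1) : ℚ)) +
      (∑ m ∈ Icc (d - p) d, ((m - 1).choose (d - p - 1) : ℚ) *
        ((l + m - 1).choose (m - 1) : ℚ)) =
    ((l + d).factorial : ℚ) /
        ((p.factorial : ℚ) * ((d - p - 1).factorial : ℚ) * (l.factorial : ℚ)) *
      (1 / ((l : ℚ) + 1 + (p : ℚ)) + 1 / ((l : ℚ) + (d : ℚ) - (p : ℚ))) := by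
  obtain ⟨q, rfl⟩ : ∃ q, d = p + q + 1 := ⟨d - 1 - p, by omega⟩
  have e1 : p + q + 1 - p = q + 1 := by omega
  rw [e1, Nat.add_sub_cancel, hemi_sum]
  have h := hemi_sum l q p
  rw [add_comm q p] at h
  rw [h]
  have e2 : (l : ℚ) + ((p + q + 1 : ℕ) : ℚ) - p = l + 1 + q := by push_cast; ring
  rw [e2]
  ring
end

section
/- Let d ≥ 1 and 0 ≤ p ≤ d−1 be integers, and for l ∈ ℕ set g(p,l) = Σ_{m=p+1}^{d} C(m−1,p)·C(l+m−1, m−1). Then the accumulated degeneracy G(p,l) := Σ_{l'=0}^{l} g(p,l') − (1/2)·g(p,l) is given exactly, as rational numbers, by G(p,l) = C(d−1,p)·(l+d)!/(l!·d!) − (1/2)·[p = 0] + (1/2)·Σ_{r=1}^{d−1} ( C(r−1,p) − C(r−1,p−1) )·(l+r)!/(l!·r!), where [p = 0] is 1 if p = 0 and 0 otherwise, and C(r−1,p−1) = 0 when p = 0. -/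
open Finset

/-- The absolute coexact `p`-form degeneracy of the `l`-th eigenlevel on the
`d`-hemisphere. -/
noncomputable def hemiDeg (d p l : ℕ) : ℚ :=
  ∑ m ∈ Icc (p + 1) d, ((m - 1).choose p : ℚ) * ((l + m - 1).choose (m - 1) : ℚ)

theorem hemiDeg_succ (k p l : ℕ) :
    hemiDeg (k + 1) p l = hemiDeg k p l + (k.choose p : ℚ) * ((l + k).choose k : ℚ) := by
  unfold hemiDeg
  by_cases h : p ≤ k
  · rw [Finset.sum_Icc_succ_top (by omega)]
    simp [← add_assoc]
  · rw [Finset.Icc_eq_empty (by omega), Finset.Icc_eq_empty (by omega),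
      Nat.choose_eq_zero_of_lt (by omega)]
    simp

theorem hemi_hockey (k l : ℕ) :
    ∑ l' ∈ range (l + 1), ((l' + k).choose k : ℚ) = ((l + (k + 1)).choose (k + 1) : ℚ) := by
  induction l with
  | zero => simp
  | succ l ih =>
    rw [Finset.sum_range_succ, ih]
    have : (l + 1 + (k + 1)).choose (k + 1)
        = (l + 1 + k).choose k + (l + (k + 1)).choose (k + 1) := by
      rw [show l + 1 + (k + 1) = (l + 1 + k) + 1 by ring, Nat.choose_succ_succ,
        show l + 1 + k = l + (k + 1) by ring]
    rw [this]; push_cast; ring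

theorem hemi_sum_succ (k p l : ℕ) :
    ∑ l' ∈ range (l + 1), hemiDeg (k + 1) p l' = (∑ l' ∈ range (l + 1), hemiDeg k p l')
      + (k.choose p : ℚ) * ((l + (k + 1)).choose (k + 1) : ℚ) := by
  simp only [hemiDeg_succ, Finset.sum_add_distrib, ← Finset.mul_sum, hemi_hockey]

theorem hemi_fact (l r : ℕ) (x : ℚ) :
    x * ((l + r).factorial : ℚ) / ((l.factorial : ℚ) * (r.factorial : ℚ))
      = x * ((l + r).choose r : ℚ) := by
  rw [Nat.choose_symm_add.symm, Nat.cast_add_choose, mul_div_assoc]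

/-- exact closed form of the accumulated degeneracy
`G(p,l) = Σ_{l'≤l} g(p,l') − (1/2) g(p,l)` on the `d`-hemisphere. -/
theorem accumulated_degeneracy_closed_form
    (d p : ℕ) (hd : 1 ≤ d) (hp : p ≤ d - 1) (l : ℕ) :
    (∑ l' ∈ range (l + 1), hemiDeg d p l') - (1 / 2 : ℚ) * hemiDeg d p l =
      ((d - 1).choose p : ℚ) * ((l + d).factorial : ℚ) /
          ((l.factorial : ℚ) * (d.factorial : ℚ)) -
        (1 / 2 : ℚ) * (if p = 0 then 1 else 0) +
        (1 / 2 : ℚ) * ∑ r ∈ Icc 1 (d - 1),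
          (((r - 1).choose p : ℚ) -
              (if p = 0 then 0 else ((r - 1).choose (p - 1) : ℚ))) *
            ((l + r).factorial : ℚ) / ((l.factorial : ℚ) * (r.factorial : ℚ)) := by
  obtain ⟨k, rfl⟩ : ∃ k, d = k + 1 := ⟨d - 1, by omega⟩
  clear hd hp
  simp only [hemi_fact, Nat.add_sub_cancel]
  induction k with
  | zero =>
    rw [hemi_sum_succ, hemiDeg_succ]
    have h0 : ∀ l', hemiDeg 0 p l' = 0 := by intro l'; simp [hemiDeg]
    rcases p with _ | p <;> simp [h0]
  | succ k ih =>
    rw [hemi_sum_succ, hemiDeg_succ, Finset.sum_Icc_succ_top (by omega)]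
    have hc : ((k + 1).choose p : ℚ) = (k.choose p : ℚ)
        + (if p = 0 then 0 else (k.choose (p - 1) : ℚ)) := by
      rcases p with _ | p
      · simp
      · simp [Nat.choose_succ_succ]; ring
    simp only [Nat.add_sub_cancel]
    linear_combination ih - (1 / 2 : ℚ) * ((l + (k + 1)).choose (k + 1) : ℚ) * hc
end

section
/- Let d ≥ 1 and 0 ≤ p ≤ d−1 be integers, and for l ∈ ℕ set g(p,l) = Σ_{m=p+1}^{d} C(m−1,p)·C(l+m−1, m−1). Define the counting function N : ℝ → ℝ by N(λ) = Σ_{l ∈ ℕ, (2l+d+1)² − (d−1−2p)² ≤ 4λ} g(p,l). Then lim_{λ→∞} N(λ)/λ^{d/2} = C(d−1,p) · π^{(d+1)/2} / ( (4π)^{d/2} · Γ(1+d/2) · Γ((d+1)/2) ), i.e. Weyl's law holds for coexact p-forms on the d-hemisphere, with the constant equal to C(d−1,p)·|M|/((4π)^{d/2} Γ(1+d/2)) where |M| = π^{(d+1)/2}/Γ((d+1)/2) is the volume of the d-hemisphere. -/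
open Finset Filter

/-- The spectral counting function for coexact `p`-forms on the `d`-hemisphere:
`N(λ)` sums the degeneracies `g(p,l)` over all levels `l` with eigenvalue at most
`λ`, i.e. with `(2l+d+1)² − (d−1−2p)² ≤ 4λ`. -/
noncomputable def countingFunction (d p : ℕ) (lam : ℝ) : ℝ :=
  ∑' l : ℕ,
    if (2 * (l : ℝ) + (d : ℝ) + 1) ^ 2 - ((d : ℝ) - 1 - 2 * (p : ℝ)) ^ 2 ≤ 4 * lam then
      ∑ m ∈ Icc (p + 1) d, ((m - 1).choose p : ℝ) * ((l + m - 1).choose (m - 1) : ℝ)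
    else 0

lemma weyl_const (d : ℕ) (c : ℝ) :
    c * Real.pi ^ (((d : ℝ) + 1) / 2) /
        ((4 * Real.pi) ^ ((d : ℝ) / 2) * Real.Gamma (1 + (d : ℝ) / 2) *
          Real.Gamma (((d : ℝ) + 1) / 2)) = c * (1 / (d.factorial : ℝ)) := by
  have hpi := Real.pi_pos
  have h := Real.Gamma_mul_Gamma_add_half (((d : ℝ) + 1) / 2)
  have e1 : ((d : ℝ) + 1) / 2 + 1 / 2 = 1 + (d : ℝ) / 2 := by ring
  have e2 : 2 * (((d : ℝ) + 1) / 2) = (d : ℝ) + 1 := by ring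
  have e3 : (1 : ℝ) - ((d : ℝ) + 1) = -(d : ℝ) := by ring
  rw [e1, e2, e3, Real.Gamma_nat_eq_factorial, Real.rpow_neg (by norm_num),
    Real.rpow_natCast] at h
  have h4 : (4 : ℝ) ^ ((d : ℝ) / 2) = 2 ^ d := by
    rw [show (4 : ℝ) = 2 ^ (2 : ℝ) by norm_num, ← Real.rpow_mul (by norm_num),
      ← Real.rpow_natCast]
    congr 1; ring
  have h5 : Real.pi ^ (((d : ℝ) + 1) / 2) = Real.pi ^ ((d : ℝ) / 2) * √Real.pi := by
    rw [Real.sqrt_eq_rpow, ← Real.rpow_add hpi]; congr 1; ring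
  rw [mul_assoc _ (Real.Gamma _), mul_comm (Real.Gamma _), h,
    Real.mul_rpow (by norm_num) hpi.le, h4, h5]
  have : (0 : ℝ) < Real.pi ^ ((d : ℝ) / 2) := Real.rpow_pos_of_pos hpi _
  have : 0 < √Real.pi := Real.sqrt_pos.2 hpi
  have : (0 : ℝ) < d.factorial := by exact_mod_cast d.factorial_pos
  field_simp

lemma sum_choose_level (n K : ℕ) :
    ∑ l ∈ range K, (l + n).choose n = (K + n).choose (n + 1) := by
  induction K with
  | zero => simp
  | succ K ih =>
    rw [sum_range_succ, ih, show K + 1 + n = (K + n) + 1 by ring, Nat.choose_succ_succ, add_comm]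

lemma choose_tendsto (K : ℝ → ℕ) (s : ℝ → ℝ) (hs : Tendsto s atTop atTop)
    (hK : Tendsto (fun x => (K x : ℝ) / s x) atTop (nhds 1)) (m d : ℕ) (hm : m ≤ d) :
    Tendsto (fun x => ((K x + m - 1).choose m : ℝ) / s x ^ d) atTop
      (nhds (1 / (m.factorial : ℝ) * 0 ^ (d - m))) := by
  have h0 : Tendsto (fun x => (s x)⁻¹) atTop (nhds 0) := tendsto_inv_atTop_zero.comp hs
  have h1 : Tendsto (fun x => ∏ i ∈ range m, ((K x : ℝ) / s x + i * (s x)⁻¹)) atTop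
      (nhds (∏ i ∈ range m, 1)) := by
    refine tendsto_finsetProd _ fun i _ => ?_
    simpa using hK.add (h0.const_mul (i : ℝ))
  have h2 := (h1.const_mul (1 / (m.factorial : ℝ))).mul (h0.pow (d - m))
  simp only [prod_const_one, mul_one] at h2
  refine h2.congr' ?_
  filter_upwards [hs.eventually_gt_atTop 0] with x hx
  have h3 : ((K x + m - 1).choose m : ℝ) * m.factorial = ∏ i ∈ range m, ((K x : ℝ) + i) := by
    have := Nat.ascFactorial_eq_factorial_mul_choose' (K x) m
    rw [Nat.ascFactorial_eq_prod_range] at this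
    have := congrArg (Nat.cast : ℕ → ℝ) this
    push_cast at this
    rw [this, mul_comm]
  have h4 : ∏ i ∈ range m, ((K x : ℝ) / s x + i * (s x)⁻¹)
      = (∏ i ∈ range m, ((K x : ℝ) + i)) / s x ^ m := by
    rw [show s x ^ m = ∏ i ∈ range m, s x by simp, ← prod_div_distrib]
    refine prod_congr rfl fun i _ => ?_
    field_simp
  have h5 : s x ^ d = s x ^ m * s x ^ (d - m) := by rw [← pow_add]; congr 1; omega
  have : (0 : ℝ) < m.factorial := by exact_mod_cast m.factorial_pos
  rw [h4, ← h3, h5, inv_pow]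
  field_simp

/-- Number of levels below `lam`. -/
noncomputable def levelBound (d p : ℕ) (lam : ℝ) : ℝ :=
  (√(4 * lam + ((d : ℝ) - 1 - 2 * (p : ℝ)) ^ 2) - (d + 1)) / 2

lemma levelBound_div (d p : ℕ) :
    Tendsto (fun lam => levelBound d p lam / √lam) atTop (nhds 1) := by
  set c := ((d : ℝ) - 1 - 2 * (p : ℝ)) ^ 2 with hc
  have h0 : Tendsto (fun x : ℝ => (√x)⁻¹) atTop (nhds 0) :=
    tendsto_inv_atTop_zero.comp Real.tendsto_sqrt_atTop
  have h1 : Tendsto (fun x : ℝ => √(4 + c * x⁻¹)) atTop (nhds √(4 + c * 0)) :=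
    (Real.continuous_sqrt.tendsto _).comp
      ((tendsto_inv_atTop_zero.const_mul c).const_add 4)
  have h2 := (h1.sub (h0.const_mul ((d : ℝ) + 1))).div_const 2
  have e : (√(4 + c * 0) - ((d : ℝ) + 1) * 0) / 2 = 1 := by
    rw [mul_zero, mul_zero, add_zero, show (4 : ℝ) = 2 ^ 2 by norm_num,
      Real.sqrt_sq (by norm_num)]; norm_num
  rw [e] at h2
  refine h2.congr' ?_
  filter_upwards [eventually_gt_atTop 0] with x hx
  have : 0 < √x := Real.sqrt_pos.2 hx
  have h3 : √(4 + c * x⁻¹) = √(4 * x + c) / √x := by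
    rw [← Real.sqrt_div' _ hx.le]; congr 1; field_simp
  rw [h3, levelBound, ← hc]
  field_simp

lemma counting_eq (d p : ℕ) (lam : ℝ) (h0 : 0 ≤ levelBound d p lam) (hl : 0 ≤ lam) :
    countingFunction d p lam = ∑ m ∈ Icc (p + 1) d, ((m - 1).choose p : ℝ) *
      (((⌊levelBound d p lam⌋₊ + 1) + m - 1).choose m : ℝ) := by
  have key : ∀ l : ℕ, (2 * (l : ℝ) + (d : ℝ) + 1) ^ 2 - ((d : ℝ) - 1 - 2 * (p : ℝ)) ^ 2 ≤ 4 * lam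
      ↔ l ∈ range (⌊levelBound d p lam⌋₊ + 1) := by
    intro l
    rw [mem_range, Nat.lt_succ_iff, Nat.le_floor_iff h0, levelBound, sub_le_iff_le_add,
      ← Real.le_sqrt' (by positivity)]
    constructor <;> intro h <;> linarith
  unfold countingFunction
  simp_rw [key]
  rw [tsum_eq_sum (s := range (⌊levelBound d p lam⌋₊ + 1))
    (fun l hl => by rw [if_neg hl]), sum_congr rfl (fun l hl => if_pos hl), sum_comm]
  refine sum_congr rfl fun m hm => ?_
  rw [← mul_sum]
  obtain ⟨n, rfl⟩ : ∃ n, m = n + 1 := ⟨m - 1, by have := (mem_Icc.1 hm).1; omega⟩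
  have := sum_choose_level n (⌊levelBound d p lam⌋₊ + 1)
  congr 1
  simp only [← add_assoc, Nat.add_sub_cancel]
  exact_mod_cast this

/-- Weyl's law for coexact `p`-forms on the `d`-hemisphere:
`N(λ)/λ^{d/2} → C(d−1,p) |M| / ((4π)^{d/2} Γ(1+d/2))` with
`|M| = π^{(d+1)/2}/Γ((d+1)/2)` the hemisphere volume. -/
theorem weyl_law_hemisphere (d p : ℕ) (hd : 1 ≤ d) (hp : p ≤ d - 1) :
    Tendsto (fun lam : ℝ => countingFunction d p lam / lam ^ ((d : ℝ) / 2)) atTop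
      (nhds (((d - 1).choose p : ℝ) * Real.pi ^ (((d : ℝ) + 1) / 2) /
        ((4 * Real.pi) ^ ((d : ℝ) / 2) * Real.Gamma (1 + (d : ℝ) / 2) *
          Real.Gamma (((d : ℝ) + 1) / 2)))) := by
  rw [weyl_const]
  have hx := levelBound_div d p
  have hs := Real.tendsto_sqrt_atTop
  have hxt : Tendsto (levelBound d p) atTop atTop := by
    refine (hx.pos_mul_atTop one_pos hs).congr' ?_
    filter_upwards [eventually_gt_atTop 0] with x hx
    have : 0 < √x := Real.sqrt_pos.2 hx
    field_simp
  have hK : Tendsto (fun x => ((⌊levelBound d p x⌋₊ + 1 : ℕ) : ℝ) / √x) atTop (nhds 1) := by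
    have h1 := ((tendsto_nat_floor_div_atTop (R := ℝ)).comp hxt).mul hx
    have h2 := h1.add (tendsto_inv_atTop_zero.comp hs)
    rw [mul_one, add_zero] at h2
    refine h2.congr' ?_
    filter_upwards [eventually_gt_atTop 0, hxt.eventually_gt_atTop 0] with x hx hx2
    have : 0 < √x := Real.sqrt_pos.2 hx
    simp only [Function.comp]
    push_cast
    field_simp
  have hsum : Tendsto (fun x => ∑ m ∈ Icc (p + 1) d, ((m - 1).choose p : ℝ) *
      ((((⌊levelBound d p x⌋₊ + 1) + m - 1).choose m : ℝ) / √x ^ d)) atTop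
      (nhds (∑ m ∈ Icc (p + 1) d, ((m - 1).choose p : ℝ) *
        (1 / (m.factorial : ℝ) * 0 ^ (d - m)))) :=
    tendsto_finsetSum _ fun m hm =>
      (choose_tendsto _ _ hs hK m d (mem_Icc.1 hm).2).const_mul _
  rw [sum_eq_single_of_mem d (mem_Icc.2 ⟨by omega, le_rfl⟩) (fun m hm hne => by
    have := (mem_Icc.1 hm).2
    rw [zero_pow (by omega)]; simp)] at hsum
  simp only [Nat.sub_self, pow_zero, mul_one] at hsum
  refine hsum.congr' ?_
  filter_upwards [eventually_ge_atTop 0, hxt.eventually_ge_atTop 0] with x hx hx2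
  rw [counting_eq d p x hx2 hx, sum_div]
  have : x ^ ((d : ℝ) / 2) = √x ^ d := by
    rw [Real.sqrt_eq_rpow, ← Real.rpow_natCast, ← Real.rpow_mul hx]; congr 1; ring
  rw [this]
  exact sum_congr rfl fun m _ => by rw [mul_div_assoc]
end

section
/- Let d ≥ 1 be an integer, let d_1,…,d_d be positive integers, let K be a field of characteristic zero and let σ ∈ K satisfy σ ≠ 0 and σ^{d_i} ≠ 1 for all i. Then the supertrace (alternating sum over form rank) of the absolute coexact generating functions satisfies σ · Σ_{p=0}^{d−1} (−σ)^p · g_a(p,σ) + d = Σ_{i=1}^{d} 1/(1−σ^{d_i}). -/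
open Finset

theorem aux_powerset {ι K : Type*} [DecidableEq ι] [Field K] (y : ι → K) (s : Finset ι)
    (h : ∀ i ∈ s, 1 + y i ≠ 0) :
    ∑ t ∈ s.powerset, (t.card : K) * ∏ i ∈ t, y i =
      (∏ i ∈ s, (1 + y i)) * ∑ i ∈ s, y i / (1 + y i) := by
  induction s using Finset.induction_on with
  | empty => simp
  | insert a s ha ih =>
    have ih' := ih (fun i hi => h i (mem_insert_of_mem hi))
    have h0 := h a (mem_insert_self a s)
    have e : ∑ t ∈ s.powerset, ((insert a t).card : K) * ∏ i ∈ insert a t, y i =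
        y a * (∑ t ∈ s.powerset, (t.card : K) * ∏ i ∈ t, y i) + y a * ∏ i ∈ s, (1 + y i) := by
      rw [prod_one_add, mul_sum, mul_sum, ← sum_add_distrib]
      refine sum_congr rfl fun t ht => ?_
      have hat : a ∉ t := fun hh => ha (mem_powerset.1 ht hh)
      rw [card_insert_of_notMem hat, prod_insert hat]
      push_cast
      ring
    rw [sum_powerset_insert ha, e, ih', prod_insert ha, sum_insert ha]
    field_simp
    ring

theorem aux_double {K : Type*} [Field K] (d : ℕ) (f : ℕ → K) :
    ∑ p ∈ range d, ∑ q ∈ range (d - p), (-1 : K) ^ q * f (d - q) =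
      (-1) ^ d * ∑ k ∈ range (d + 1), (k : K) * ((-1) ^ k * f k) := by
  rw [sum_comm' (t' := range d) (s' := fun q => range (d - q))
    (by intro p q; simp only [mem_range]; omega)]
  rw [sum_range_succ', ← sum_range_reflect (fun k => ((k + 1 : ℕ) : K) * _) d]
  simp only [Nat.cast_zero, zero_mul, add_zero, sum_const, card_range, nsmul_eq_mul, mul_sum]
  refine sum_congr rfl fun q hq => ?_
  have hq := mem_range.1 hq
  obtain ⟨m, rfl⟩ : ∃ m, d = q + m := ⟨d - q, by omega⟩
  have h1 : q + m - 1 - q + 1 = m := by omega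
  have h2 : q + m - q = m := by omega
  have h3 : (-1 : K) ^ m * (-1) ^ m = 1 := by rw [← mul_pow]; simp
  rw [h1, h2, pow_add]
  linear_combination (-(m : K) * (-1) ^ q * f m) * h3

/-- the supertrace identity
`σ Σ_{p=0}^{d-1} (−σ)^p g_a(p,σ) + d = Σ_{i=1}^d 1/(1−σ^{d_i})`. -/
theorem supertrace_identity
    (d : ℕ) (hd : 1 ≤ d) (dd : Fin d → ℕ) (hdd : ∀ i, 0 < dd i)
    (K : Type*) [Field K] [CharZero K] (σ : K) (hσ : σ ≠ 0)
    (hσd : ∀ i, σ ^ dd i ≠ 1) :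
    σ * (∑ p ∈ range d, (-σ) ^ p *
        ((-1 : K) ^ (d + 1 + p) *
            (∑ q ∈ range (d - p), (-1 : K) ^ q *
              ∑ t ∈ powersetCard (d - q) (univ : Finset (Fin d)), ∏ i ∈ t, σ ^ dd i) /
          (σ ^ (p + 1) * ∏ i, (1 - σ ^ dd i)))) + (d : K) =
      ∑ i, (1 - σ ^ dd i)⁻¹ := by
  have hx : ∀ i, 1 - σ ^ dd i ≠ 0 := fun i => sub_ne_zero.2 (hσd i).symm
  have hP : ∏ i, (1 - σ ^ dd i) ≠ 0 := prod_ne_zero_iff.2 fun i _ => hx i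
  have key := aux_powerset (fun i => -σ ^ dd i) (univ : Finset (Fin d))
    (fun i _ => by simpa [← sub_eq_add_neg] using hx i)
  have key2 := aux_double (K := K) d
    (fun k => ∑ t ∈ powersetCard k (univ : Finset (Fin d)), ∏ i ∈ t, σ ^ dd i)
  have e1 : ∑ k ∈ range (d + 1), (k : K) * ((-1) ^ k *
      ∑ t ∈ powersetCard k (univ : Finset (Fin d)), ∏ i ∈ t, σ ^ dd i) =
      (∏ i, (1 - σ ^ dd i)) * ∑ i, -σ ^ dd i / (1 - σ ^ dd i) := by
    simp only [← sub_eq_add_neg] at key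
    rw [← key, sum_powerset, card_univ, Fintype.card_fin]
    refine sum_congr rfl fun k _ => ?_
    rw [mul_sum, mul_sum]
    refine sum_congr rfl fun t ht => ?_
    rw [(mem_powersetCard.1 ht).2, prod_neg, (mem_powersetCard.1 ht).2]
  rw [e1] at key2
  have e2 : ∀ p ∈ range d, ∀ S : K, (-σ) ^ p * ((-1 : K) ^ (d + 1 + p) * S /
      (σ ^ (p + 1) * ∏ i, (1 - σ ^ dd i))) =
      ((-1) ^ (d + 1) / (σ * ∏ i, (1 - σ ^ dd i))) * S := by
    intro p _ S
    have h3 : (-1 : K) ^ p * (-1) ^ p = 1 := by rw [← mul_pow]; simp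
    rw [neg_pow σ p, pow_add (-1 : K) (d + 1) p, pow_succ σ p]
    have := pow_ne_zero p hσ
    rw [← mul_div_assoc, div_mul_eq_mul_div, div_eq_div_iff (by positivity) (by positivity)]
    linear_combination (σ ^ p * (-1) ^ (d + 1) * S * σ * ∏ i, (1 - σ ^ dd i)) * h3
  rw [sum_congr rfl fun p hp => e2 p hp _, ← mul_sum, key2]
  have h3 : (-1 : K) ^ d * (-1) ^ d = 1 := by rw [← mul_pow]; simp
  have e3 : ∑ i, (1 - σ ^ dd i)⁻¹ = -(∑ i, -σ ^ dd i / (1 - σ ^ dd i)) + d := by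
    have : (d : K) = ∑ i : Fin d, 1 := by simp
    rw [this, ← sum_neg_distrib, ← sum_add_distrib]
    refine sum_congr rfl fun i _ => ?_
    have := hx i
    field_simp
    ring
  rw [e3]
  generalize (∑ i, -σ ^ dd i / (1 - σ ^ dd i)) = T
  generalize (∏ i, (1 - σ ^ dd i)) = P at *
  rw [pow_succ]
  field_simp
  linear_combination (-T) * h3
end

section
/- Let d ≥ 1 be an integer, let d_1,…,d_d be positive integers, let K be a field and let z, σ ∈ K satisfy z ≠ 0, σ ≠ 0, σ^{d_i} ≠ 1 for all i, z + σ ≠ 0 and 1 + zσ ≠ 0. Define w(z,σ) = G_r(z,σ) − G_a(z,σ) − z^d. Then w is anti-reciprocal of degree d−1 in the fugacity: z^{d−1} · w(1/z, σ) = − w(z, σ). -/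
open Finset

/-- The relative double Poincaré series `G_r(z,σ)`. -/
noncomputable def Grel (d : ℕ) (dd : Fin d → ℕ) {K : Type*} [Field K] (z σ : K) : K :=
  (1 + z * σ)⁻¹ * ((∏ i, (z + σ ^ (dd i - 1)) / (1 - σ ^ dd i)) + z ^ (d + 1) * σ)

/-- The absolute double Poincaré series `G_a(z,σ)`. -/
noncomputable def Gabs (d : ℕ) (dd : Fin d → ℕ) {K : Type*} [Field K] (z σ : K) : K :=
  (z + σ)⁻¹ * ((∏ i, (1 + z * σ ^ (dd i - 1)) / (1 - σ ^ dd i)) - 1)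

/-- The modified difference `w(z,σ) = G_r(z,σ) − G_a(z,σ) − z^d`. -/
noncomputable def wDiff (d : ℕ) (dd : Fin d → ℕ) {K : Type*} [Field K] (z σ : K) : K :=
  Grel d dd z σ - Gabs d dd z σ - z ^ d

/-- `w` is anti-reciprocal of degree `d−1` in the fugacity:
`z^(d−1) w(1/z, σ) = − w(z, σ)`. -/
theorem w_antireciprocal
    (d : ℕ) (hd : 1 ≤ d) (dd : Fin d → ℕ) (hdd : ∀ i, 0 < dd i)
    (K : Type*) [Field K] (z σ : K) (hz : z ≠ 0) (hσ : σ ≠ 0)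
    (hσd : ∀ i, σ ^ dd i ≠ 1) (hzσ : z + σ ≠ 0) (hzσ' : 1 + z * σ ≠ 0) :
    z ^ (d - 1) * wDiff d dd z⁻¹ σ = - wDiff d dd z σ := by
  obtain ⟨n, rfl⟩ : ∃ n, d = n + 1 := ⟨d - 1, by omega⟩
  have hA : (∏ i, (z⁻¹ + σ ^ (dd i - 1)) / (1 - σ ^ dd i))
      = (∏ i, (1 + z * σ ^ (dd i - 1)) / (1 - σ ^ dd i)) * (z ^ (n + 1))⁻¹ := by
    have h : (z ^ (n + 1))⁻¹ = ∏ _i : Fin (n + 1), z⁻¹ := by simp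
    rw [h, ← Finset.prod_mul_distrib]
    refine Finset.prod_congr rfl fun i _ => ?_
    rw [div_mul_eq_mul_div]
    congr 1
    field_simp
  have hB : (∏ i, (1 + z⁻¹ * σ ^ (dd i - 1)) / (1 - σ ^ dd i))
      = (∏ i, (z + σ ^ (dd i - 1)) / (1 - σ ^ dd i)) * (z ^ (n + 1))⁻¹ := by
    have h : (z ^ (n + 1))⁻¹ = ∏ _i : Fin (n + 1), z⁻¹ := by simp
    rw [h, ← Finset.prod_mul_distrib]
    refine Finset.prod_congr rfl fun i _ => ?_
    rw [div_mul_eq_mul_div]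
    congr 1
    field_simp
  unfold wDiff Grel Gabs
  rw [hA, hB]
  generalize (∏ i, (z + σ ^ (dd i - 1)) / (1 - σ ^ dd i)) = A
  generalize (∏ i, (1 + z * σ ^ (dd i - 1)) / (1 - σ ^ dd i)) = B
  have h1 : (1 + z⁻¹ * σ)⁻¹ = z * (z + σ)⁻¹ := by
    rw [show 1 + z⁻¹ * σ = z⁻¹ * (z + σ) by field_simp, mul_inv, inv_inv]
  have h2 : (z⁻¹ + σ)⁻¹ = z * (1 + z * σ)⁻¹ := by
    rw [show z⁻¹ + σ = z⁻¹ * (1 + z * σ) by field_simp, mul_inv, inv_inv]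
  rw [h1, h2, Nat.add_sub_cancel]
  simp only [inv_pow, pow_succ]
  have hp : z ^ n ≠ 0 := pow_ne_zero n hz
  generalize z ^ n = p at *
  field_simp
  ring
end

section
/- Let α, β ∈ (0, 2π) be real numbers with cos α ≠ cos β. Then there exists an entire function F : ℂ → ℂ such that for every s ∈ ℂ with Re s > 1 the series Σ_{n=1}^∞ 2·( sin α · sin(nβ) − sin β · sin(nα) ) / ( (cos α − cos β) · n^s ) converges and equals F(s), and F(0) = − cot(α/2) · cot(β/2). -/
open Filter Topology in
lemma eta_bound (m s : ℝ) (n : ℕ) (hm : 0 < m) (hm1 : m ≤ 1) (hs1 : 1 ≤ s) (hs2 : s ≤ 2)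
    (x y : ℝ) (hx : n + m ≤ x) (hx' : x ≤ n + m + 1) (hy : n + m ≤ y) (hy' : y ≤ n + m + 1) :
    |x ^ (-s) - y ^ (-s)| ≤ 2 * (1 / m) ^ 2 * (1 / ((n : ℝ) + 1) ^ 2) := by
  have hn : (0 : ℝ) ≤ n := Nat.cast_nonneg n
  set c : ℝ := n + m with hc
  have hc0 : 0 < c := by positivity
  have key : ∀ z, c ≤ z → z ≤ c + 1 → (c + 1) ^ (-s) ≤ z ^ (-s) ∧ z ^ (-s) ≤ c ^ (-s) := by
    intro z h1 h2
    exact ⟨Real.rpow_le_rpow_of_nonpos (by linarith) h2 (by linarith),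
      Real.rpow_le_rpow_of_nonpos hc0 h1 (by linarith)⟩
  have hA : c ^ (-s) ≤ (1 / m) ^ 2 * (1 / ((n : ℝ) + 1)) := by
    have h1 : c ^ (-s) ≤ (m * (n + 1)) ^ (-s) := by
      apply Real.rpow_le_rpow_of_nonpos (by positivity) _ (by linarith)
      nlinarith
    have h2 : (m * ((n : ℝ) + 1)) ^ (-s) = m ^ (-s) * ((n : ℝ) + 1) ^ (-s) :=
      Real.mul_rpow hm.le (by positivity)
    have h3 : m ^ (-s) ≤ (1 / m) ^ 2 := by
      have : m ^ (-s) ≤ m ^ (-2 : ℝ) :=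
        Real.rpow_le_rpow_of_exponent_ge hm hm1 (by linarith)
      refine this.trans (le_of_eq ?_)
      rw [Real.rpow_neg hm.le]
      simp
    have h4 : ((n : ℝ) + 1) ^ (-s) ≤ 1 / ((n : ℝ) + 1) := by
      have : ((n : ℝ) + 1) ^ (-s) ≤ ((n : ℝ) + 1) ^ (-1 : ℝ) :=
        Real.rpow_le_rpow_of_exponent_le (by linarith) (by linarith)
      refine this.trans (le_of_eq ?_)
      rw [Real.rpow_neg_one, one_div]
    rw [h2] at h1
    refine h1.trans ?_
    gcongr
  have hB : c ^ (-s) - (c + 1) ^ (-s) = c ^ (-s) * (1 - (c / (c + 1)) ^ s) := by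
    rw [Real.div_rpow hc0.le (by linarith), Real.rpow_neg hc0.le, Real.rpow_neg (by linarith)]
    have : 0 < c ^ s := by positivity
    have : 0 < (c + 1) ^ s := by positivity
    field_simp
  have hC : 1 - (c / (c + 1)) ^ s ≤ 2 * (1 / ((n : ℝ) + 1)) := by
    have h1 : (c / (c + 1)) ^ (2 : ℝ) ≤ (c / (c + 1)) ^ s := by
      apply Real.rpow_le_rpow_of_exponent_ge (by positivity) _ hs2
      rw [div_le_one (by positivity)]; linarith
    have h2 : 1 - (c / (c + 1)) ^ (2 : ℝ) ≤ 2 * (1 / (c + 1)) := by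
      rw [Real.rpow_two]
      have : c / (c + 1) = 1 - 1 / (c + 1) := by field_simp; ring
      rw [this]
      nlinarith [sq_nonneg (1 / (c + 1))]
    have h3 : 1 / (c + 1) ≤ 1 / ((n : ℝ) + 1) := by
      apply one_div_le_one_div_of_le (by positivity); linarith
    linarith
  have hD : c ^ (-s) - (c + 1) ^ (-s) ≤ 2 * (1 / m) ^ 2 * (1 / ((n : ℝ) + 1) ^ 2) := by
    rw [hB]
    calc c ^ (-s) * (1 - (c / (c + 1)) ^ s)
        ≤ c ^ (-s) * (2 * (1 / ((n : ℝ) + 1))) := by gcongr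
      _ ≤ ((1 / m) ^ 2 * (1 / ((n : ℝ) + 1))) * (2 * (1 / ((n : ℝ) + 1))) := by gcongr
      _ = _ := by field_simp
  have k1 := key x hx hx'
  have k2 := key y hy hy'
  rw [abs_le]
  constructor <;> linarith [k1.1, k1.2, k2.1, k2.2]

lemma eta_summable (m : ℝ) :
    Summable (fun n : ℕ => 2 * (1 / m) ^ 2 * (1 / ((n : ℝ) + 1) ^ 2)) := by
  apply Summable.mul_left
  have := (summable_nat_add_iff 1).mpr (Real.summable_one_div_nat_pow.mpr (one_lt_two))
  simpa using this

lemma eta_bound' (a s : ℝ) (ha : 0 < a) (ha1 : a < 1) (hs1 : 1 ≤ s) (hs2 : s ≤ 2) (n : ℕ) :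
    |((n : ℝ) + a) ^ (-s) - ((n : ℝ) + 1 - a) ^ (-s)| ≤
      2 * (1 / (min a (1 - a))) ^ 2 * (1 / ((n : ℝ) + 1) ^ 2) := by
  have h1 := min_le_left a (1 - a)
  have h2 := min_le_right a (1 - a)
  have h0 : 0 < min a (1 - a) := lt_min ha (by linarith)
  apply eta_bound _ s n h0 (by linarith) hs1 hs2 <;> linarith

open Filter Topology in
lemma eta_cot_sum (a : ℝ) (ha : 0 < a) (ha1 : a < 1) :
    HasSum (fun n : ℕ => ((n : ℝ) + a) ^ (-1 : ℝ) - ((n : ℝ) + 1 - a) ^ (-1 : ℝ))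
      (Real.pi * Real.cot (Real.pi * a)) := by
  have hsum : Summable (fun n : ℕ => ((n : ℝ) + a) ^ (-1 : ℝ) - ((n : ℝ) + 1 - a) ^ (-1 : ℝ)) := by
    apply Summable.of_norm_bounded (eta_summable (min a (1 - a)))
    intro n
    exact eta_bound' a 1 ha ha1 le_rfl (by norm_num) n
  rw [hsum.hasSum_iff_tendsto_nat]
  have haZ : (a : ℂ) ∈ Complex.integerComplement := by
    rintro ⟨k, hk⟩
    have hk' : (k : ℝ) = a := by exact_mod_cast hk
    rw [← hk'] at ha ha1
    have h1 : 0 < k := by exact_mod_cast ha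
    have h2 : k < 1 := by exact_mod_cast ha1
    omega
  have h := tendsto_logDeriv_euler_cot_sub haZ
  have hR : Tendsto (fun N : ℕ => ∑ j ∈ Finset.range N,
      (1 / (a - ((j : ℝ) + 1)) + 1 / (a + ((j : ℝ) + 1)))) atTop
      (𝓝 (Real.pi * Real.cot (Real.pi * a) - 1 / a)) := by
    have h' := (Complex.continuous_re.tendsto _).comp h
    have e : (Real.pi * Complex.cot (Real.pi * a) - 1 / a : ℂ) =
        ((Real.pi * Real.cot (Real.pi * a) - 1 / a : ℝ) : ℂ) := by push_cast; rfl
    rw [e, Complex.ofReal_re] at h'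
    refine h'.congr fun N => ?_
    have e2 : ∑ j ∈ Finset.range N, cotTerm (a : ℂ) j = ((∑ j ∈ Finset.range N,
      (1 / (a - ((j : ℝ) + 1)) + 1 / (a + ((j : ℝ) + 1))) : ℝ) : ℂ) := by
      push_cast; rfl
    rw [Function.comp_apply, e2, Complex.ofReal_re]
  have hz : Tendsto (fun N : ℕ => 1 / ((N : ℝ) + a)) atTop (𝓝 0) := by
    apply Tendsto.div_atTop tendsto_const_nhds
    exact tendsto_atTop_add_const_right _ _ tendsto_natCast_atTop_atTop
  have := (hR.add_const (1 / a)).sub hz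
  rw [sub_add_cancel, sub_zero] at this
  refine this.congr fun N => ?_
  induction N with
  | zero => simp
  | succ k ih =>
    rw [Finset.sum_range_succ, Finset.sum_range_succ, ← ih, Real.rpow_neg_one, Real.rpow_neg_one,
      ← one_div, ← one_div]
    have e : 1 / (a - ((k : ℝ) + 1)) = - (1 / ((k : ℝ) + 1 - a)) := by
      rw [← neg_sub, div_neg]
    rw [e]
    push_cast
    rw [add_comm a ((k : ℝ) + 1)]
    ring

open Filter Topology in
lemma eta_hurwitz_one (a : ℝ) (ha : 0 < a) (ha1 : a < 1) :
    HurwitzZeta.hurwitzZetaOdd (a : UnitAddCircle) 1 =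
      ((Real.pi * Real.cot (Real.pi * a) / 2 : ℝ) : ℂ) := by
  have hl : Tendsto (fun s : ℝ => ∑' n : ℕ, (((n : ℝ) + a) ^ (-s) - ((n : ℝ) + 1 - a) ^ (-s)))
      (𝓝[>] 1) (𝓝 (∑' n : ℕ, (((n : ℝ) + a) ^ (-1 : ℝ) - ((n : ℝ) + 1 - a) ^ (-1 : ℝ)))) := by
    apply tendsto_tsum_of_dominated_convergence (eta_summable (min a (1 - a)))
    · intro n
      have hn : (0 : ℝ) ≤ n := Nat.cast_nonneg n
      apply tendsto_nhdsWithin_of_tendsto_nhds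
      apply Tendsto.sub
      · exact tendsto_const_nhds.rpow tendsto_id.neg (Or.inl (by positivity))
      · exact tendsto_const_nhds.rpow tendsto_id.neg (Or.inl (by linarith))
    · have : Set.Ioo (1 : ℝ) 2 ∈ 𝓝[>] (1 : ℝ) := Ioo_mem_nhdsGT (by norm_num)
      filter_upwards [this] with s hs n
      exact eta_bound' a s ha ha1 hs.1.le hs.2.le n
  rw [(eta_cot_sum a ha ha1).tsum_eq] at hl
  have hl2 : Tendsto (fun s : ℝ => (((∑' n : ℕ, (((n : ℝ) + a) ^ (-s) -
      ((n : ℝ) + 1 - a) ^ (-s))) / 2 : ℝ) : ℂ)) (𝓝[>] 1)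
      (𝓝 ((Real.pi * Real.cot (Real.pi * a) / 2 : ℝ) : ℂ)) :=
    (Complex.continuous_ofReal.tendsto _).comp (hl.div_const 2)
  have hr : Tendsto (fun s : ℝ => HurwitzZeta.hurwitzZetaOdd (a : UnitAddCircle) (s : ℂ)) (𝓝[>] 1)
      (𝓝 (HurwitzZeta.hurwitzZetaOdd (a : UnitAddCircle) 1)) := by
    apply tendsto_nhdsWithin_of_tendsto_nhds
    have := ((HurwitzZeta.differentiable_hurwitzZetaOdd (a : UnitAddCircle)).continuous.comp
      Complex.continuous_ofReal).tendsto 1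
    simpa [Function.comp_def] using this
  refine tendsto_nhds_unique hr (hl2.congr' ?_)
  filter_upwards [self_mem_nhdsWithin] with s hs
  have h := HurwitzZeta.hasSum_nat_hurwitzZetaOdd_of_mem_Icc (a := a) ⟨ha.le, ha1.le⟩
    (s := (s : ℂ)) (by simpa using hs)
  rw [← h.tsum_eq, ← tsum_div_const, Complex.ofReal_tsum]
  congr 1
  ext n
  have hn : (0 : ℝ) ≤ n := Nat.cast_nonneg n
  have h1 : 0 ≤ (n : ℝ) + a := by positivity
  have h2 : 0 ≤ (n : ℝ) + 1 - a := by linarith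
  rw [Real.rpow_neg h1, Real.rpow_neg h2]
  push_cast [Complex.ofReal_cpow h1, Complex.ofReal_cpow h2]
  simp only [one_div]

lemma eta_sin_zero (θ : ℝ) (h0 : 0 < θ) (h1 : θ < 2 * Real.pi) :
    HurwitzZeta.sinZeta ((θ / (2 * Real.pi) : ℝ) : UnitAddCircle) 0 =
      ((Real.cot (θ / 2) / 2 : ℝ) : ℂ) := by
  have hp := Real.pi_pos
  have h := HurwitzZeta.sinZeta_one_sub ((θ / (2 * Real.pi) : ℝ) : UnitAddCircle) (s := 1)
    (by
      intro n hn
      have : (1 : ℝ) = -n := by exact_mod_cast hn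
      have hn : (0 : ℝ) ≤ n := Nat.cast_nonneg n
      linarith)
  rw [sub_self, eta_hurwitz_one _ (by positivity) (by rw [div_lt_one (by positivity)]; exact h1),
    show Real.pi * (θ / (2 * Real.pi)) = θ / 2 by field_simp] at h
  rw [h, Complex.cpow_neg_one, Complex.Gamma_one, mul_one, mul_one, Complex.sin_pi_div_two]
  have : (Real.pi : ℂ) ≠ 0 := by exact_mod_cast hp.ne'
  push_cast
  field_simp

lemma eta_hasSum (θ : ℝ) (s : ℂ) (hs : 1 < s.re) :
    HasSum (fun n : ℕ => (Real.sin (((n : ℝ) + 1) * θ) : ℂ) / (((n : ℂ) + 1) ^ s))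
      (HurwitzZeta.sinZeta ((θ / (2 * Real.pi) : ℝ) : UnitAddCircle) s) := by
  have hp := Real.pi_pos
  have h := HurwitzZeta.hasSum_nat_sinZeta (θ / (2 * Real.pi)) hs
  rw [← hasSum_nat_add_iff' 1] at h
  simp only [Finset.sum_range_one, Nat.cast_zero, mul_zero, Real.sin_zero, Complex.ofReal_zero,
    zero_div, sub_zero] at h
  refine h.congr_fun fun n => ?_
  have e : 2 * Real.pi * (θ / (2 * Real.pi)) * ((n + 1 : ℕ) : ℝ) = ((n : ℝ) + 1) * θ := by
    push_cast
    field_simp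
  rw [e, Nat.cast_succ]

/-- the partial spin-1 eta function
`η(γ,s) = 2 Σ_{n≥1} (sin α sin nβ − sin β sin nα)/((cos α − cos β) n^s)`
extends to an entire function `F` with `F(0) = − cot(α/2) cot(β/2)`. -/
theorem partial_eta_function_value_at_zero
    (α β : ℝ) (hα : α ∈ Set.Ioo 0 (2 * Real.pi)) (hβ : β ∈ Set.Ioo 0 (2 * Real.pi))
    (hcos : Real.cos α ≠ Real.cos β) :
    ∃ F : ℂ → ℂ, Differentiable ℂ F ∧
      (∀ s : ℂ, 1 < s.re →
        HasSum (fun n : ℕ =>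
          ((2 * (Real.sin α * Real.sin (((n : ℝ) + 1) * β) -
              Real.sin β * Real.sin (((n : ℝ) + 1) * α)) /
            (Real.cos α - Real.cos β) : ℝ) : ℂ) / (((n : ℂ) + 1) ^ s)) (F s)) ∧
      F 0 = ((-(Real.cot (α / 2) * Real.cot (β / 2)) : ℝ) : ℂ) := by

  have hsa : Real.sin (α / 2) ≠ 0 :=
    (Real.sin_pos_of_pos_of_lt_pi (by linarith [hα.1]) (by linarith [hα.2])).ne'
  have hsb : Real.sin (β / 2) ≠ 0 :=
    (Real.sin_pos_of_pos_of_lt_pi (by linarith [hβ.1]) (by linarith [hβ.2])).ne'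
  have hd : Real.cos α - Real.cos β ≠ 0 := sub_ne_zero.mpr hcos
  refine ⟨fun s => ((2 / (Real.cos α - Real.cos β) : ℝ) : ℂ) *
    ((Real.sin α : ℂ) * HurwitzZeta.sinZeta ((β / (2 * Real.pi) : ℝ) : UnitAddCircle) s -
     (Real.sin β : ℂ) * HurwitzZeta.sinZeta ((α / (2 * Real.pi) : ℝ) : UnitAddCircle) s),
    ?_, ?_, ?_⟩
  · exact (((HurwitzZeta.differentiableAt_sinZeta _).const_mul _).sub
      ((HurwitzZeta.differentiableAt_sinZeta _).const_mul _)).const_mul _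
  · intro s hs
    refine ((((eta_hasSum β s hs).mul_left (Real.sin α : ℂ)).sub
      ((eta_hasSum α s hs).mul_left (Real.sin β : ℂ))).mul_left
      ((2 / (Real.cos α - Real.cos β) : ℝ) : ℂ)).congr_fun fun n => ?_
    simp only [Complex.ofReal_div, Complex.ofReal_mul, Complex.ofReal_sub, Complex.ofReal_ofNat]
    ring
  · simp only
    rw [eta_sin_zero β hβ.1 hβ.2, eta_sin_zero α hα.1 hα.2]
    norm_cast
    have ca : Real.cos α = 1 - 2 * Real.sin (α / 2) ^ 2 := by
      have := Real.cos_two_mul (α / 2)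
      rw [mul_div_cancel₀ _ two_ne_zero] at this
      linarith [Real.sin_sq_add_cos_sq (α / 2)]
    have cb : Real.cos β = 1 - 2 * Real.sin (β / 2) ^ 2 := by
      have := Real.cos_two_mul (β / 2)
      rw [mul_div_cancel₀ _ two_ne_zero] at this
      linarith [Real.sin_sq_add_cos_sq (β / 2)]
    have sa : Real.sin α = 2 * Real.sin (α / 2) * Real.cos (α / 2) := by
      rw [← Real.sin_two_mul, mul_div_cancel₀ _ two_ne_zero]
    have sb : Real.sin β = 2 * Real.sin (β / 2) * Real.cos (β / 2) := by
      rw [← Real.sin_two_mul, mul_div_cancel₀ _ two_ne_zero]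
    rw [Real.cot_eq_cos_div_sin, Real.cot_eq_cos_div_sin, sa, sb]
    rw [ca, cb] at hd ⊢
    generalize Real.sin (α / 2) = p at *
    generalize Real.sin (β / 2) = q at *
    generalize Real.cos (α / 2) = u at *
    generalize Real.cos (β / 2) = v at *
    rw [div_mul_eq_mul_div, div_eq_iff hd]
    field_simp
    ring
end

section
/- Let d ≥ 1 be an integer, let d_1,…,d_d be positive integers, let K be a field and let σ ∈ K satisfy σ ≠ 0 and σ^{d_i} ≠ 1 for all i. Then the complete scalar (0-form) generating functions are: (a) absolute (Neumann): 1 + σ · g_a(0,σ) = ∏_{i=1}^{d} 1/(1−σ^{d_i}); (b) relative (Dirichlet): σ · g_r(0,σ) = σ^{1+Σ_{i=1}^{d}(d_i−1)} / ∏_{i=1}^{d} (1−σ^{d_i}). -/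
open Finset

/-- the complete scalar (0-form) generating functions:
(a) absolute (Neumann): `1 + σ g_a(0,σ) = ∏ 1/(1−σ^{d_i})`;
(b) relative (Dirichlet): `σ g_r(0,σ) = σ^{1+Σ(d_i−1)} / ∏ (1−σ^{d_i})`. -/
theorem scalar_generating_functions
    (d : ℕ) (hd : 1 ≤ d) (dd : Fin d → ℕ) (hdd : ∀ i, 0 < dd i)
    (K : Type*) [Field K] (σ : K) (hσ : σ ≠ 0) (hσd : ∀ i, σ ^ dd i ≠ 1) :
    (1 + σ *
        ((-1 : K) ^ (d + 1 + 0) *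
            (∑ q ∈ range (d - 0), (-1 : K) ^ q *
              ∑ t ∈ powersetCard (d - q) (univ : Finset (Fin d)), ∏ i ∈ t, σ ^ dd i) /
          (σ ^ (0 + 1) * ∏ i, (1 - σ ^ dd i))) =
      ∏ i, (1 - σ ^ dd i)⁻¹) ∧
    (σ *
        ((-1 : K) ^ (0 : ℕ) *
            (∑ q ∈ range (0 + 1), (-1 : K) ^ q *
              ∑ t ∈ powersetCard (d - q) (univ : Finset (Fin d)), ∏ i ∈ t, σ ^ dd i) /
          (σ ^ (d - 0) * ∏ i, (1 - σ ^ dd i))) =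
      σ ^ (1 + ∑ i, (dd i - 1)) / ∏ i, (1 - σ ^ dd i)) := by
  have hP : ∏ i, (1 - σ ^ dd i) ≠ 0 :=
    Finset.prod_ne_zero_iff.mpr fun i _ => sub_ne_zero.mpr (hσd i).symm
  have key : ∏ i, (1 - σ ^ dd i) = ∑ k ∈ range (d + 1), (-1 : K) ^ k *
      ∑ t ∈ powersetCard k (univ : Finset (Fin d)), ∏ i ∈ t, σ ^ dd i := by
    have h1 : ∏ i, (1 - σ ^ dd i) = ∏ i, (1 + -σ ^ dd i) := by
      simp only [sub_eq_add_neg]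
    rw [h1, Finset.prod_one_add, Finset.sum_powerset]
    simp only [Finset.card_univ, Fintype.card_fin]
    refine Finset.sum_congr rfl fun k _ => ?_
    rw [Finset.mul_sum]
    refine Finset.sum_congr rfl fun t ht => ?_
    rw [Finset.prod_neg, (Finset.mem_powersetCard.mp ht).2]
  rw [← Finset.sum_range_reflect, Finset.sum_range_succ] at key
  constructor
  · have hs : (-1 : K) ^ (d + 1 + 0) * (∑ q ∈ range (d - 0), (-1 : K) ^ q *
        ∑ t ∈ powersetCard (d - q) (univ : Finset (Fin d)), ∏ i ∈ t, σ ^ dd i)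
        = 1 - ∏ i, (1 - σ ^ dd i) := by
      rw [key]
      simp only [Nat.add_sub_cancel, Nat.sub_self, Nat.sub_zero, pow_zero, powersetCard_zero,
        sum_singleton, prod_empty, mul_one, add_zero]
      rw [sub_add_cancel_right, Finset.mul_sum, ← Finset.sum_neg_distrib]
      refine Finset.sum_congr rfl fun q hq => ?_
      have hq' := Finset.mem_range.mp hq
      have e : (-1 : K) ^ (d + 1) * (-1) ^ q = -(-1) ^ (d - q) := by
        obtain ⟨m, rfl⟩ := Nat.exists_eq_add_of_lt hq'
        have : q + m + 1 - q = m + 1 := by omega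
        rw [this]
        have h2 : ((-1 : K) ^ q) * (-1) ^ q = 1 := by rw [← mul_pow]; simp
        linear_combination ((-1 : K) ^ m) * h2
      rw [← mul_assoc, e, neg_mul]
    rw [hs, Finset.prod_inv_distrib]
    field_simp
    ring
  · have hsum : ∑ i, dd i = d + ∑ i, (dd i - 1) := by
      have : ∑ i, dd i = ∑ i, (1 + (dd i - 1)) :=
        Finset.sum_congr rfl fun i _ => by have := hdd i; omega
      rw [this, Finset.sum_add_distrib]
      simp
    have ht : powersetCard d (univ : Finset (Fin d)) = {univ} := by
      have := Finset.powersetCard_self (univ : Finset (Fin d))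
      simpa using this
    simp only [zero_add, sum_range_one, pow_zero, one_mul, Nat.sub_zero, ht, sum_singleton]
    rw [Finset.prod_pow_eq_pow_sum, hsum, pow_add, pow_add]
    field_simp
end
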